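/- Let q be a prime power, d a positive integer, and f ∈ F_q[x,y,z] a nonzero homogeneous polynomial of degree d having no linear factor with coefficients in F_q (i.e., the plane curve C = V(f) has no F_q-linear component). Then the number of points [a:b:c] ∈ P²(F_q) with f(a,b,c) = 0 is at most (d-1)q + 1, except when q = 4, d = 4 and f is projectively equivalent over F_4 (i.e., equal, up to a nonzero scalar, to the image under an invertible F_4-linear change of the variables x,y,z) to K = x⁴ + y⁴ + z⁴ + x²y² + y²z² + z²x² + x²yz + xy²z + xyz²; in that exceptional case the number of F_4-points of C equals 14. -/

import Mathlib

open MvPolynomial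

noncomputable section

/-- The exceptional quartic `K` of Homma--Kim:
`x⁴ + y⁴ + z⁴ + x²y² + y²z² + z²x² + x²yz + xy²z + xyz²`. -/
def hommaKimQuartic (F : Type) [Field F] : MvPolynomial (Fin 3) F :=
  X 0 ^ 4 + X 1 ^ 4 + X 2 ^ 4 + X 0 ^ 2 * X 1 ^ 2 + X 1 ^ 2 * X 2 ^ 2 + X 2 ^ 2 * X 0 ^ 2
    + X 0 ^ 2 * X 1 * X 2 + X 0 * X 1 ^ 2 * X 2 + X 0 * X 1 * X 2 ^ 2

/-- `f` is projectively equivalent over the base field to `g`: `f` equals, up to a nonzero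
scalar, the image of `g` under an invertible linear change of the variables. -/
def ProjectivelyEquivalent (F : Type) [Field F] (f g : MvPolynomial (Fin 3) F) : Prop :=
  ∃ M : Matrix (Fin 3) (Fin 3) F, IsUnit M.det ∧ ∃ c : F, c ≠ 0 ∧
    f = c • (MvPolynomial.aeval (fun i => ∑ j, MvPolynomial.C (M i j) * MvPolynomial.X j) g)

set_option linter.unusedSectionVars false

section Comb
open Configuration ProjectivePlane
variable {P L : Type} [Membership P L] [ProjectivePlane P L] [Fintype P] [Fintype L]

/-- A Cayley-Bacharach type condition using products of lines only. -/
def CBcond (P L : Type) [Membership P L] (k : ℕ) (S : Finset P) : Prop :=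
  ∀ R ∈ S, ∀ T : List L, T.length ≤ k → (∀ l ∈ T, R ∉ l) → ∃ X ∈ S, X ≠ R ∧ ∀ l ∈ T, X ∉ l

lemma line_unique {X Y : P} (h : X ≠ Y) {l m : L} (h1 : X ∈ l) (h2 : Y ∈ l) (h3 : X ∈ m)
    (h4 : Y ∈ m) : l = m := (Nondegenerate.eq_or_eq h1 h2 h3 h4).resolve_left h

lemma exists_join (X Y : P) (h : X ≠ Y) : ∃ l : L, X ∈ l ∧ Y ∈ l :=
  ⟨_, HasLines.mkLine_ax h⟩

open Classical in
lemma card_lines_through (X : P) :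
    (Finset.univ.filter (fun l : L => X ∈ l)).card = order P L + 1 := by
  rw [← lineCount_eq L X, lineCount, Nat.card_eq_fintype_card, Fintype.card_subtype]

open Classical in
lemma card_points_on (l : L) :
    (Finset.univ.filter (fun X : P => X ∈ l)).card = order P L + 1 := by
  rw [← pointCount_eq P l, pointCount, Nat.card_eq_fintype_card, Fintype.card_subtype]

lemma exists_line_avoid2 (X : P) (m1 m2 : L) : ∃ l : L, X ∈ l ∧ l ≠ m1 ∧ l ≠ m2 := by
  classical
  by_contra! h
  have h1 := card_lines_through (L := L) X
  have h2 := one_lt_order P L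
  have : (Finset.univ.filter (fun l : L => X ∈ l)) ⊆ {m1, m2} := by
    intro l hl
    simp only [Finset.mem_filter, Finset.mem_univ, true_and] at hl
    simp only [Finset.mem_insert, Finset.mem_singleton]
    have := h l hl
    tauto
  have := (Finset.card_le_card this).trans Finset.card_le_two
  omega

lemma exists_line_avoid (X R : P) (h : X ≠ R) : ∃ l : L, X ∈ l ∧ R ∉ l := by
  obtain ⟨m, hm⟩ := exists_join (L := L) X R h
  obtain ⟨l, hl, hl2, -⟩ := exists_line_avoid2 X m m
  exact ⟨l, hl, fun hR => hl2 (line_unique h hl hR hm.1 hm.2)⟩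

lemma exists_a_line (P L : Type) [Membership P L] [ProjectivePlane P L] : ∃ l : L, True := by
  obtain ⟨p₁, p₂, p₃, l₁, h⟩ := @exists_config P L _ _
  exact ⟨l₁, trivial⟩

lemma CB_lemA {k : ℕ} {S : Finset P} (h : CBcond P L k S) (hS : S.Nonempty) : k + 2 ≤ S.card := by
  classical
  obtain ⟨R, hR⟩ := hS
  by_contra! hlt
  haveI : Nonempty L := ⟨(exists_a_line P L).choose⟩
  choose! g hg using fun (X : P) (hX : X ≠ R) => exists_line_avoid (L := L) X R hX
  obtain ⟨X, hX, hXR, hXT⟩ := h R hR (((S.erase R).toList).map g)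
    (by rw [List.length_map, Finset.length_toList, Finset.card_erase_of_mem hR]; omega)
    (by
      intro l hl
      simp only [List.mem_map, Finset.mem_toList, Finset.mem_erase] at hl
      obtain ⟨Y, hY, rfl⟩ := hl
      exact (hg Y hY.1).2)
  apply hXT (g X) _ (hg X hXR).1
  simp only [List.mem_map, Finset.mem_toList, Finset.mem_erase]
  exact ⟨X, ⟨hXR, hX⟩, rfl⟩

open Classical in
lemma CB_remove {k : ℕ} {S : Finset P} (h : CBcond P L (k + 1) S) (l : L) :
    CBcond P L k (S.filter (fun X => X ∉ l)) := by
  intro R hR T hT hRT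
  rw [Finset.mem_filter] at hR
  obtain ⟨X, hX, hXR, hXT⟩ := h R hR.1 (l :: T) (by simpa using hT)
    (by simp only [List.mem_cons, forall_eq_or_imp]; exact ⟨hR.2, hRT⟩)
  simp only [List.mem_cons, forall_eq_or_imp] at hXT
  exact ⟨X, Finset.mem_filter.2 ⟨hX, hXT.1⟩, hXR, hXT.2⟩

lemma CB_lemB {k : ℕ} : ∀ {S : Finset P}, CBcond P L k S → S.card ≤ 2 * k + 1 →
    ∃ l : L, ∀ X ∈ S, X ∈ l := by
  classical
  induction k with
  | zero =>
    intro S h hc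
    rcases S.eq_empty_or_nonempty with rfl | hne
    · obtain ⟨l, -⟩ := exists_a_line P L
      exact ⟨l, by simp⟩
    · have := CB_lemA h hne
      omega
  | succ k ih =>
    intro S h hc
    rcases S.eq_empty_or_nonempty with rfl | hne
    · obtain ⟨l, -⟩ := exists_a_line P L
      exact ⟨l, by simp⟩
    have hA := CB_lemA h hne
    obtain ⟨X, hX, Y, hY, hXY⟩ := Finset.one_lt_card.1 (by omega : 1 < S.card)
    obtain ⟨l, hlX, hlY⟩ := exists_join (L := L) X Y hXY
    have hsplit : ∀ m : L, (S.filter (fun X => X ∈ m)).card + (S.filter (fun X => X ∉ m)).card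
      = S.card := fun m => Finset.card_filter_add_card_filter_not _
    have h2 : 2 ≤ (S.filter (fun X => X ∈ l)).card := by
      apply Finset.one_lt_card.2
      exact ⟨X, Finset.mem_filter.2 ⟨hX, hlX⟩, Y, Finset.mem_filter.2 ⟨hY, hlY⟩, hXY⟩
    have h3 := hsplit l
    obtain ⟨m, hm⟩ := ih (CB_remove h l) (by omega)
    rcases (S.filter (fun X => X ∉ l)).eq_empty_or_nonempty with he | hne2
    · refine ⟨l, fun Z hZ => ?_⟩
      by_contra hZl
      exact absurd (Finset.mem_filter.2 ⟨hZ, hZl⟩ : Z ∈ S.filter (fun X => X ∉ l)) (by simp [he])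
    have h4 := CB_lemA (CB_remove h l) hne2
    have h5 : (S.filter (fun X => X ∉ l)).card ≤ (S.filter (fun X => X ∈ m)).card := by
      apply Finset.card_le_card
      intro Z hZ
      exact Finset.mem_filter.2 ⟨(Finset.mem_filter.1 hZ).1, hm Z hZ⟩
    have h6 := hsplit m
    refine ⟨m, fun Z hZ => ?_⟩
    by_contra hZl
    have := CB_lemA (CB_remove h m) ⟨Z, Finset.mem_filter.2 ⟨hZ, hZl⟩⟩
    omega

open Classical in
/-- number of points of `S` on the line -/
noncomputable def tnum (S : Finset P) (l : L) : ℕ := (S.filter (fun X => X ∈ l)).card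

lemma sum_tnum (S : Finset P) : ∑ l : L, tnum S l = S.card * (order P L + 1) := by
  classical
  have : ∀ l : L, tnum S l = ∑ X ∈ S, if X ∈ l then 1 else 0 := by
    intro l; rw [tnum, Finset.card_filter]
  simp_rw [this]
  rw [Finset.sum_comm]
  have : ∀ X ∈ S, (∑ l : L, if X ∈ l then 1 else 0) = order P L + 1 := by
    intro X _
    rw [← card_lines_through (L := L) X, Finset.card_filter]
  rw [Finset.sum_congr rfl this, Finset.sum_const, smul_eq_mul]

lemma sum_tnum_sq (S : Finset P) :
    ∑ l : L, tnum S l * tnum S l = S.card * (order P L + S.card) := by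
  classical
  have : ∀ l : L, tnum S l * tnum S l =
      ∑ X ∈ S, ∑ Y ∈ S, if X ∈ l ∧ Y ∈ l then 1 else 0 := by
    intro l; rw [tnum, Finset.card_filter, Finset.sum_mul_sum]
    refine Finset.sum_congr rfl fun X _ => Finset.sum_congr rfl fun Y _ => ?_
    by_cases h1 : X ∈ l <;> by_cases h2 : Y ∈ l <;> simp [h1, h2]
  simp_rw [this]
  rw [Finset.sum_comm]
  have : ∀ X ∈ S, (∑ l : L, ∑ Y ∈ S, if X ∈ l ∧ Y ∈ l then 1 else 0) = order P L + S.card := by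
    intro X hX
    rw [Finset.sum_comm, ← Finset.add_sum_erase _ _ hX]
    have h1 : (∑ l : L, if X ∈ l ∧ X ∈ l then 1 else 0) = order P L + 1 := by
      rw [← card_lines_through (L := L) X, Finset.card_filter]; simp
    have h2 : ∀ Y ∈ S.erase X, (∑ l : L, if X ∈ l ∧ Y ∈ l then 1 else 0) = 1 := by
      intro Y hY
      have hne : X ≠ Y := (Finset.ne_of_mem_erase hY).symm
      obtain ⟨m, hm1, hm2⟩ := exists_join (L := L) X Y hne
      rw [Finset.sum_eq_single m]
      · simp [hm1, hm2]
      · intro l _ hl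
        rw [if_neg]
        rintro ⟨a, b⟩
        exact hl (line_unique hne a b hm1 hm2)
      · simp
    rw [h1, Finset.sum_congr rfl h2, Finset.sum_const, Finset.card_erase_of_mem hX, smul_eq_mul]
    have : 0 < S.card := Finset.card_pos.2 ⟨X, hX⟩
    omega
  rw [Finset.sum_congr rfl this, Finset.sum_const, smul_eq_mul]

lemma blocking_struct {S : Finset P} (hb : ∀ l : L, 1 ≤ tnum S l)
    (hc : S.card + 1 ≤ 2 * order P L) (hcb : CBcond P L (order P L - 2) S) :
    (∃ l m : L, ∀ X ∈ S, X ∈ l ∨ X ∈ m) ∨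
    (order P L = 4 ∧ S.card = 7 ∧ ∀ l : L, tnum S l = 1 ∨ tnum S l = 3) := by
  classical
  have h1 := one_lt_order P L
  have s1 := sum_tnum (L := L) S
  have s2 := sum_tnum_sq (L := L) S
  have s0 := card_lines P L
  set n := order P L with hn
  have hsplit : ∀ m : L, tnum S m + (S.filter (fun X => X ∉ m)).card
      = S.card := fun m => Finset.card_filter_add_card_filter_not _
  have key : ∀ l : L, (∃ m : L, ∀ X ∈ S.filter (fun X => X ∉ l), X ∈ m) →
      (∃ l m : L, ∀ X ∈ S, X ∈ l ∨ X ∈ m) := by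
    rintro l ⟨m, hm⟩
    refine ⟨l, m, fun X hX => ?_⟩
    by_cases hXl : X ∈ l
    · exact Or.inl hXl
    · exact Or.inr (hm X (Finset.mem_filter.2 ⟨hX, hXl⟩))
  have two : ∀ U : Finset P, U.card ≤ 2 → ∃ m : L, ∀ X ∈ U, X ∈ m := by
    intro U hU
    obtain ⟨l0, -⟩ := exists_a_line P L
    by_cases hne : ∃ X ∈ U, ∃ Y ∈ U, X ≠ Y
    · obtain ⟨X, hX, Y, hY, hXY⟩ := hne
      obtain ⟨m, hm1, hm2⟩ := exists_join (L := L) X Y hXY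
      refine ⟨m, fun Z hZ => ?_⟩
      by_contra hZm
      have : ({X, Y, Z} : Finset P) ⊆ U := by
        intro W hW
        simp only [Finset.mem_insert, Finset.mem_singleton] at hW
        rcases hW with rfl | rfl | rfl <;> assumption
      have h3 := Finset.card_le_card this
      rw [Finset.card_eq_three.2 ⟨X, Y, Z, hXY, fun h => hZm (h ▸ hm1), fun h => hZm (h ▸ hm2), rfl⟩] at h3
      omega
    · push Not at hne
      rcases U.eq_empty_or_nonempty with rfl | ⟨X, hX⟩
      · exact ⟨l0, by simp⟩
      · obtain ⟨m, hm, -⟩ := exists_line_avoid2 X l0 l0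
        exact ⟨m, fun Z hZ => (hne X hX Z hZ) ▸ hm⟩
  by_cases h4 : ∃ l : L, 4 ≤ tnum S l
  · left
    obtain ⟨l, hl⟩ := h4
    apply key l
    have := hsplit l
    rcases Nat.lt_or_ge n 3 with h | h
    · apply two; omega
    · have hcb' : CBcond P L ((n - 3) + 1) S := by
        convert hcb using 1; omega
      exact CB_lemB (CB_remove hcb' l) (by omega)
  · push Not at h4
    -- sum of (t-1)(3-t)
    have q1 : (∑ l : L, (((tnum S l : ℤ) - 1) * (3 - (tnum S l : ℤ)))) =
        4 * (S.card * (n + 1)) - S.card * (n + S.card) - 3 * (n ^ 2 + n + 1) := by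
      have e : ∀ l : L, (((tnum S l : ℤ) - 1) * (3 - (tnum S l : ℤ))) =
        4 * (tnum S l : ℤ) - (tnum S l : ℤ) * (tnum S l : ℤ) - 3 := by intro l; ring
      simp_rw [e]
      rw [Finset.sum_sub_distrib, Finset.sum_sub_distrib, ← Finset.mul_sum]
      have s1' : (∑ l : L, (tnum S l : ℤ)) = S.card * (n + 1) := by exact_mod_cast s1
      have s2' : (∑ l : L, (tnum S l : ℤ) * (tnum S l : ℤ)) = S.card * (n + S.card) := by
        exact_mod_cast s2
      rw [s1', s2', Finset.sum_const, Finset.card_univ, s0]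
      simp; ring
    have q2 : ∀ l ∈ (Finset.univ : Finset L), 0 ≤ (((tnum S l : ℤ) - 1) * (3 - (tnum S l : ℤ))) := by
      intro l _
      have a1 := hb l
      have a2 := h4 l
      apply mul_nonneg <;> omega
    have q3 := Finset.sum_nonneg q2
    rw [q1] at q3
    have hn5 : n < 5 := by
      by_contra! hge
      have : (5 : ℤ) ≤ n := by exact_mod_cast hge
      nlinarith [sq_nonneg (2 * (S.card : ℤ) - (3 * n + 4))]
    have c1 := hc
    generalize hcard : S.card = c at *
    interval_cases n
    · left
      obtain ⟨l0, -⟩ := exists_a_line P L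
      apply key l0
      apply two
      have := hsplit l0; have := hb l0
      omega
    · left
      by_cases h3 : ∃ l : L, 3 ≤ tnum S l
      · obtain ⟨l, hl⟩ := h3
        apply key l
        apply two
        have := hsplit l
        omega
      · exfalso
        push Not at h3
        have r1 : (∑ l : L, (((tnum S l : ℤ) - 1) * ((tnum S l : ℤ) - 2))) = 0 := by
          apply Finset.sum_eq_zero
          intro l _
          have a1 := hb l
          have a2 := h3 l
          generalize tnum S l = t at *
          interval_cases t <;> simp
        have r2 : (∑ l : L, (((tnum S l : ℤ) - 1) * ((tnum S l : ℤ) - 2))) =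
            c * (3 + c) - 3 * (c * 4) + 2 * 13 := by
          have e : ∀ l : L, (((tnum S l : ℤ) - 1) * ((tnum S l : ℤ) - 2)) =
            (tnum S l : ℤ) * (tnum S l : ℤ) - 3 * (tnum S l : ℤ) + 2 := by intro l; ring
          simp_rw [e]
          rw [Finset.sum_add_distrib, Finset.sum_sub_distrib, ← Finset.mul_sum]
          have s1' : (∑ l : L, (tnum S l : ℤ)) = c * (3 + 1) := by exact_mod_cast s1
          have s2' : (∑ l : L, (tnum S l : ℤ) * (tnum S l : ℤ)) = c * (3 + c) := by
            exact_mod_cast s2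
          rw [s1', s2', Finset.sum_const, Finset.card_univ, s0]
          simp
        rw [r1] at r2
        have : c ≤ 5 := by omega
        interval_cases c <;> omega
    · right
      have c7 : c = 7 := by
        have : c ≤ 7 := by omega
        clear q1 q2 s1 s2 hcard hsplit
        interval_cases c <;> first | rfl | (exfalso; norm_num at q3)
      refine ⟨rfl, c7, fun l => ?_⟩
      subst c7
      have q4 := (Finset.sum_eq_zero_iff_of_nonneg q2).1 (by rw [q1]; norm_num) l (Finset.mem_univ l)
      have a1 := hb l
      have a2 := h4 l
      generalize tnum S l = t at *
      interval_cases t <;> simp_all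

lemma blocking_twolines {S : Finset P} (hb : ∀ l : L, 1 ≤ tnum S l)
    (hc : S.card + 1 ≤ 2 * order P L) (hcb : CBcond P L (order P L - 2) S)
    (htan : ∀ X ∉ S, ∃ l : L, X ∈ l ∧ 2 ≤ tnum S l) (l m : L) (hlm : ∀ X ∈ S, X ∈ l ∨ X ∈ m) :
    False := by
  classical
  have h1 := one_lt_order P L
  have hbl : ∀ k : L, ∃ X ∈ S, X ∈ k := by
    intro k
    have := Finset.card_pos.1 (show 0 < (S.filter (fun X => X ∈ k)).card from hb k)
    obtain ⟨X, hX⟩ := this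
    rw [Finset.mem_filter] at hX
    exact ⟨X, hX⟩
  -- S contains a full line
  have hfull : ∃ k : L, ∀ X, X ∈ k → X ∈ S := by
    by_contra! hno
    by_cases hlm' : l = m
    · subst hlm'
      obtain ⟨X, hX, hXS⟩ := hno l
      obtain ⟨k, hk, hkl, -⟩ := exists_line_avoid2 X l l
      obtain ⟨Y, hYS, hYk⟩ := hbl k
      have hYl : Y ∈ l := by simpa using hlm Y hYS
      have : X ≠ Y := fun h => hXS (h ▸ hYS)
      exact hkl (line_unique this hk hYk hX hYl)
    obtain ⟨O, hOl, hOm⟩ : ∃ O : P, O ∈ l ∧ O ∈ m := ⟨_, HasPoints.mkPoint_ax hlm'⟩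
    have hO : O ∈ S := by
      obtain ⟨k, hk, hkl, hkm⟩ := exists_line_avoid2 O l m
      obtain ⟨Y, hYS, hYk⟩ := hbl k
      by_cases hOY : O = Y
      · rwa [hOY]
      · rcases hlm Y hYS with h | h
        · exact absurd (line_unique hOY hk hYk hOl h) hkl
        · exact absurd (line_unique hOY hk hYk hOm h) hkm
    obtain ⟨A, hAl, hAS⟩ := hno l
    obtain ⟨B, hBm, hBS⟩ := hno m
    have hAm : A ∉ m := fun h => hlm' (line_unique (show A ≠ O from fun e => hAS (by rw [e]; exact hO)) hAl hOl h hOm)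
    have hBl : B ∉ l := fun h => hlm' (line_unique (show B ≠ O from fun e => hBS (by rw [e]; exact hO)) h hOl hBm hOm)
    have hAB : A ≠ B := fun h => hAm (h ▸ hBm)
    obtain ⟨k, hkA, hkB⟩ := exists_join (L := L) A B hAB
    obtain ⟨Y, hYS, hYk⟩ := hbl k
    rcases hlm Y hYS with h | h
    · have := line_unique (show A ≠ Y from fun e => hAS (by rw [e]; exact hYS)) hkA hYk hAl h
      exact hBl (this ▸ hkB)
    · have := line_unique (show B ≠ Y from fun e => hBS (by rw [e]; exact hYS)) hkB hYk hBm h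
      exact hAm (this ▸ hkA)
  obtain ⟨k, hk⟩ := hfull
  have hkt : tnum S k = order P L + 1 := by
    rw [← card_points_on (P := P) k, tnum]
    congr 1
    ext X; simp; exact hk X
  have hsplit : tnum S k + (S.filter (fun X => X ∉ k)).card
      = S.card := Finset.card_filter_add_card_filter_not _
  have hempty : S.filter (fun X => X ∉ k) = ∅ := by
    rcases Nat.lt_or_ge (order P L) 3 with h | h
    · apply Finset.card_eq_zero.1; omega
    · have hcb' : CBcond P L ((order P L - 3) + 1) S := by
        convert hcb using 1; omega
      by_contra hne
      have := CB_lemA (CB_remove hcb' k) (Finset.nonempty_iff_ne_empty.2 hne)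
      omega
  have hSk : ∀ X ∈ S, X ∈ k := by
    intro X hX
    by_contra hXk
    exact absurd (Finset.mem_filter.2 ⟨hX, hXk⟩ : X ∈ S.filter (fun X => X ∉ k)) (by simp [hempty])
  obtain ⟨X, hX⟩ := Nondegenerate.exists_point (P := P) k
  obtain ⟨r, hr, hr2⟩ := htan X (fun h => hX (hSk X h))
  obtain ⟨A, hA, B, hB, hAB⟩ := Finset.one_lt_card.1 (show 1 < (S.filter (fun X => X ∈ r)).card from hr2)
  rw [Finset.mem_filter] at hA hB
  have := line_unique hAB hA.2 hB.2 (hSk A hA.1) (hSk B hB.1)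
  exact hX (this ▸ hr)
end Comb

section Basics
variable {F : Type} [Field F]

/-- the monomial exponent -/
def ex (i j k : ℕ) : Fin 3 →₀ ℕ := Finsupp.single 0 i + Finsupp.single 1 j + Finsupp.single 2 k

lemma ex_zero (i j k : ℕ) : ex i j k 0 = i := by simp [ex]
lemma ex_one (i j k : ℕ) : ex i j k 1 = j := by simp [ex]
lemma ex_two (i j k : ℕ) : ex i j k 2 = k := by simp [ex]

lemma ex_eq (s : Fin 3 →₀ ℕ) : s = ex (s 0) (s 1) (s 2) := by
  ext i
  fin_cases i
  · exact (ex_zero _ _ _).symm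
  · exact (ex_one _ _ _).symm
  · exact (ex_two _ _ _).symm

lemma deg_fin3 (s : Fin 3 →₀ ℕ) : s.degree = s 0 + s 1 + s 2 := by
  rw [Finsupp.degree_eq_sum, Fin.sum_univ_three]

lemma hom_sum {f : MvPolynomial (Fin 3) F} {d : ℕ} (hf : f.IsHomogeneous d) {s : Fin 3 →₀ ℕ}
    (hs : s ∈ f.support) : s 0 + s 1 + s 2 = d := by
  by_contra h
  rw [mem_support_iff] at hs
  exact hs (hf.coeff_eq_zero (by rwa [deg_fin3]))

/-- restriction to the line `z = 0`. -/
lemma aeval_line {A : Type} [CommRing A] [Algebra F A] {f : MvPolynomial (Fin 3) F} {d : ℕ}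
    (hf : f.IsHomogeneous d) (a b : A) :
    aeval ![a, b, 0] f = ∑ k ∈ Finset.range (d + 1),
      algebraMap F A (coeff (ex (d - k) k 0) f) * (a ^ (d - k) * b ^ k) := by
  classical
  rw [aeval_def, eval₂_eq']
  have h1 : ∀ s ∈ f.support, s ∉ f.support.filter (fun s => s 2 = 0) →
    algebraMap F A (coeff s f) * ∏ i, ![a, b, 0] i ^ s i = 0 := by
    intro s hs hs2
    rw [Finset.mem_filter, not_and] at hs2
    rw [Fin.prod_univ_three]
    simp [zero_pow (hs2 hs)]
  rw [← Finset.sum_subset (Finset.filter_subset _ _) h1]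
  apply Finset.sum_bij_ne_zero (fun s _ _ => s 1)
  · intro s hs _
    have := hom_sum hf (Finset.mem_filter.1 hs).1
    rw [Finset.mem_range]; omega
  · intro s hs _ t ht _ hst
    have h1 := hom_sum hf (Finset.mem_filter.1 hs).1
    have h2 := hom_sum hf (Finset.mem_filter.1 ht).1
    have h3 := (Finset.mem_filter.1 hs).2
    have h4 := (Finset.mem_filter.1 ht).2
    rw [ex_eq s, ex_eq t, h3, h4, hst]
    congr 1; omega
  · intro k hk hne
    refine ⟨ex (d - k) k 0, ?_, ?_, ex_one _ _ _⟩
    · rw [Finset.mem_filter, mem_support_iff]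
      refine ⟨fun h => hne (by rw [h]; simp), ex_two _ _ _⟩
    · rw [Fin.prod_univ_three, ex_zero, ex_one, ex_two]
      simpa using hne
  · intro s hs hne
    have h1 := hom_sum hf (Finset.mem_filter.1 hs).1
    have h3 := (Finset.mem_filter.1 hs).2
    have e : s = ex (d - s 1) (s 1) 0 := by
      conv_lhs => rw [ex_eq s, h3]
      congr 1; omega
    have e0 : s 0 = d - s 1 := by omega
    rw [← e, Fin.prod_univ_three, h3, e0]
    simp

/-- linear substitution -/
def lsub (M : Matrix (Fin 3) (Fin 3) F) (f : MvPolynomial (Fin 3) F) : MvPolynomial (Fin 3) F :=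
  MvPolynomial.aeval (fun i => ∑ j, MvPolynomial.C (M i j) * MvPolynomial.X j) f

lemma lsub_mul (M : Matrix (Fin 3) (Fin 3) F) (f g : MvPolynomial (Fin 3) F) :
    lsub M (f * g) = lsub M f * lsub M g := by simp [lsub]

lemma lsub_hom (M : Matrix (Fin 3) (Fin 3) F) {f : MvPolynomial (Fin 3) F} {d : ℕ}
    (hf : f.IsHomogeneous d) : (lsub M f).IsHomogeneous d := by
  have := hf.aeval (fun i => ∑ j, MvPolynomial.C (M i j) * MvPolynomial.X j) (n := 1)
    (fun i => IsHomogeneous.sum _ _ _ fun j _ => isHomogeneous_C_mul_X _ _)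
  rwa [one_mul] at this

lemma aeval_lsub {A : Type} [CommRing A] [Algebra F A] (M : Matrix (Fin 3) (Fin 3) F)
    (f : MvPolynomial (Fin 3) F) (x : Fin 3 → A) :
    aeval x (lsub M f) = aeval (fun i => ∑ j, algebraMap F A (M i j) * x j) f := by
  rw [lsub, ← AlgHom.comp_apply]
  congr 1
  apply algHom_ext
  intro i
  simp

lemma eval_lsub (M : Matrix (Fin 3) (Fin 3) F)
    (f : MvPolynomial (Fin 3) F) (x : Fin 3 → F) :
    eval x (lsub M f) = eval (M.mulVec x) f := by
  have := aeval_lsub (A := F) M f x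
  rw [aeval_eq_eval, aeval_eq_eval] at this
  exact this

lemma lsub_one (f : MvPolynomial (Fin 3) F) : lsub 1 f = f := by
  have : (fun i : Fin 3 => ∑ j, MvPolynomial.C ((1 : Matrix (Fin 3) (Fin 3) F) i j) * X j) = X := by
    funext i
    rw [Finset.sum_eq_single i]
    · simp
    · intro j _ hj; rw [Matrix.one_apply_ne hj.symm]; simp
    · simp
  rw [lsub, this, aeval_X_left_apply]

lemma lsub_lsub (M N : Matrix (Fin 3) (Fin 3) F) (f : MvPolynomial (Fin 3) F) :
    lsub N (lsub M f) = lsub (M * N) f := by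
  have h : lsub N (lsub M f) = aeval (fun i => ∑ j, C (N i j) * X j) (lsub M f) := rfl
  rw [h, aeval_lsub]
  refine congrArg (fun x : Fin 3 → MvPolynomial (Fin 3) F => aeval x f) ?_
  funext i
  simp only [Finset.mul_sum, Matrix.mul_apply, map_sum, Finset.sum_mul, algebraMap_eq, C_mul]
  rw [Finset.sum_comm]
  refine Finset.sum_congr rfl fun j _ => Finset.sum_congr rfl fun k _ => ?_
  ring

/-- restriction of `f` to the line `p + s v` -/
def lineP (f : MvPolynomial (Fin 3) F) (p v : Fin 3 → F) : Polynomial F :=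
  aeval (fun i => Polynomial.C (p i) + Polynomial.C (v i) * Polynomial.X) f

lemma aeval_smul_add {A : Type} [CommRing A] [Algebra F A] {f : MvPolynomial (Fin 3) F} {d : ℕ}
    (hf : f.IsHomogeneous d) (p v : Fin 3 → F) (a b : A) :
    aeval (fun i => algebraMap F A (p i) * a + algebraMap F A (v i) * b) f =
    ∑ k ∈ Finset.range (d + 1), algebraMap F A ((lineP f p v).coeff k) * (a ^ (d - k) * b ^ k) := by
  set M : Matrix (Fin 3) (Fin 3) F := Matrix.of fun i => ![p i, v i, 0] with hM
  have h1 : ∀ {B : Type} [CommRing B] [Algebra F B] (a b : B),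
      aeval (fun i => algebraMap F B (p i) * a + algebraMap F B (v i) * b) f =
      ∑ k ∈ Finset.range (d + 1), algebraMap F B (coeff (ex (d - k) k 0) (lsub M f)) *
        (a ^ (d - k) * b ^ k) := by
    intro B _ _ a b
    rw [← aeval_line (lsub_hom M hf), aeval_lsub]
    congr 2
    funext i
    simp [hM, Fin.sum_univ_three]
  have h2 : lineP f p v = ∑ k ∈ Finset.range (d + 1),
      Polynomial.C (coeff (ex (d - k) k 0) (lsub M f)) * Polynomial.X ^ k := by
    have := @h1 (Polynomial F) _ _ 1 Polynomial.X
    simp only [mul_one, one_pow, one_mul, Polynomial.algebraMap_eq] at this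
    rw [← this]; rfl
  rw [h1]
  refine Finset.sum_congr rfl fun k hk => ?_
  rw [h2]
  congr 2
  rw [Polynomial.finsetSum_coeff, Finset.sum_eq_single k]
  · simp
  · intro j _ hj
    rw [Polynomial.coeff_C_mul_X_pow, if_neg hj.symm]
  · intro h; exact absurd hk h

lemma lineP_natDegree {f : MvPolynomial (Fin 3) F} {d : ℕ}
    (hf : f.IsHomogeneous d) (p v : Fin 3 → F) : (lineP f p v).natDegree ≤ d := by
  have := aeval_smul_add hf p v (1 : Polynomial F) Polynomial.X
  simp only [mul_one, one_pow, one_mul, Polynomial.algebraMap_eq] at this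
  change lineP f p v = _ at this
  rw [this]
  apply Polynomial.natDegree_sum_le_of_forall_le
  intro k hk
  refine (Polynomial.natDegree_C_mul_X_pow_le _ _).trans ?_
  have := Finset.mem_range.1 hk; omega

lemma lineP_swap {f : MvPolynomial (Fin 3) F} {d : ℕ}
    (hf : f.IsHomogeneous d) (p v : Fin 3 → F) {k : ℕ} (hk : k ≤ d) :
    (lineP f v p).coeff k = (lineP f p v).coeff (d - k) := by
  have := aeval_smul_add hf p v Polynomial.X (1 : Polynomial F)
  simp only [mul_one, one_pow, Polynomial.algebraMap_eq] at this
  have h2 : lineP f v p = aeval (fun i => Polynomial.C (p i) * Polynomial.X + Polynomial.C (v i)) f := by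
    rw [lineP]; congr 2; funext i; ring
  rw [h2, this, Polynomial.finsetSum_coeff, Finset.sum_eq_single (d - k)]
  · rw [Polynomial.coeff_C_mul_X_pow, if_pos (by omega)]
  · intro j hj hjk
    have := Finset.mem_range.1 hj
    rw [Polynomial.coeff_C_mul_X_pow, if_neg (by omega)]
  · intro h; exact absurd (Finset.mem_range.2 (by omega)) h

lemma lineP_eval (f : MvPolynomial (Fin 3) F) (p v : Fin 3 → F) (a : F) :
    (lineP f p v).eval a = eval (p + a • v) f := by
  have : (lineP f p v).eval a = Polynomial.aeval a (lineP f p v) := by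
    rw [Polynomial.aeval_def]; rfl
  rw [this, lineP, comp_aeval_apply, aeval_eq_eval]
  refine congrArg (fun x : Fin 3 → F => eval x f) ?_
  funext i
  simp only [map_add, map_mul, Polynomial.aeval_C, Polynomial.aeval_X, Pi.add_apply, Pi.smul_apply,
    smul_eq_mul, Algebra.algebraMap_self, RingHom.id_apply]
  ring

lemma lineP_coeff_zero (f : MvPolynomial (Fin 3) F) (p v : Fin 3 → F) :
    (lineP f p v).coeff 0 = eval p f := by
  rw [Polynomial.coeff_zero_eq_eval_zero, lineP_eval]; simp

lemma lineP_coeff_top {f : MvPolynomial (Fin 3) F} {d : ℕ}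
    (hf : f.IsHomogeneous d) (p v : Fin 3 → F) :
    (lineP f p v).coeff d = eval v f := by
  rw [lineP_swap hf v p le_rfl, Nat.sub_self, lineP_coeff_zero]

/-- first order Taylor expansion -/
lemma taylor1 {A : Type} [CommRing A] [Algebra F A] (f : MvPolynomial (Fin 3) F)
    (x y : Fin 3 → A) (e : A) (he : e * e = 0) :
    aeval (fun i => x i + e * y i) f = aeval x f + e * ∑ i, y i * aeval x (pderiv i f) := by
  induction f using MvPolynomial.induction_on with
  | C a => simp
  | add p q hp hq =>
    simp only [map_add, hp, hq, mul_add, Finset.sum_add_distrib]; ring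
  | mul_X p j hp =>
    simp only [map_mul, hp, aeval_X, Derivation.leibniz, pderiv_X, smul_eq_mul, map_add, mul_add,
      Finset.sum_add_distrib]
    have h1 : ∑ i, y i * ((aeval x) p * (aeval x) (Pi.single (M := fun _ => MvPolynomial (Fin 3) F) i 1 j)) = y j * aeval x p := by
      rw [Finset.sum_eq_single j]
      · simp
      · intro i _ hi
        rw [Pi.single_eq_of_ne hi.symm]; simp
      · simp
    have h2 : ∑ i, y i * (x j * aeval x (pderiv i p)) = x j * ∑ i, y i * aeval x (pderiv i p) := by
      rw [Finset.mul_sum]; refine Finset.sum_congr rfl fun i _ => ?_; ring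
    rw [h1, h2]
    linear_combination (y j * ∑ i, y i * aeval x (pderiv i p)) * he

lemma lineP_coeff_one (f : MvPolynomial (Fin 3) F) (p v : Fin 3 → F) :
    (lineP f p v).coeff 1 = ∑ i, v i * eval p (pderiv i f) := by
  induction f using MvPolynomial.induction_on with
  | C a => simp [lineP, Polynomial.coeff_C]
  | add g h hg hh =>
    have e : lineP (g + h) p v = lineP g p v + lineP h p v := by simp [lineP]
    rw [e, Polynomial.coeff_add, hg, hh]
    simp only [map_add, mul_add, Finset.sum_add_distrib]
  | mul_X g j hg =>
    have e : lineP (g * X j) p v = lineP g p v * Polynomial.C (p j) +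
        lineP g p v * Polynomial.C (v j) * Polynomial.X := by
      simp only [lineP, map_mul, aeval_X]; ring
    rw [e, Polynomial.coeff_add, Polynomial.coeff_mul_C, Polynomial.coeff_mul_X,
      Polynomial.coeff_mul_C, hg, lineP_coeff_zero]
    simp only [map_mul, eval_X, Derivation.leibniz, pderiv_X, smul_eq_mul, map_add, mul_add,
      Finset.sum_add_distrib]
    have h1 : ∑ i, v i * (eval p g * eval p (Pi.single (M := fun _ => MvPolynomial (Fin 3) F) i 1 j)) = v j * eval p g := by
      rw [Finset.sum_eq_single j]
      · simp
      · intro i _ hi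
        rw [Pi.single_eq_of_ne hi.symm]; simp
      · simp
    have h2 : ∑ i, v i * (p j * eval p (pderiv i g)) = p j * ∑ i, v i * eval p (pderiv i g) := by
      rw [Finset.mul_sum]; refine Finset.sum_congr rfl fun i _ => ?_; ring
    rw [h1, h2]; ring

lemma exists_third {p v : Fin 3 → F} (h : crossProduct p v ≠ 0) : ∃ n : Fin 3 → F,
    (Matrix.of fun i => ![p i, v i, n i]).det ≠ 0 := by
  by_contra! hn
  apply h
  have h0 := hn ![1, 0, 0]
  have h1 := hn ![0, 1, 0]
  have h2 := hn ![0, 0, 1]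
  simp [Matrix.det_fin_three] at h0 h1 h2
  funext i
  fin_cases i
  · simp [cross_apply]; linear_combination h0
  · simp [cross_apply]; linear_combination h1
  · simp [cross_apply]; linear_combination h2

lemma lsub_inv (M : Matrix (Fin 3) (Fin 3) F) (hM : M.det ≠ 0) (f : MvPolynomial (Fin 3) F) :
    lsub M⁻¹ (lsub M f) = f := by
  rw [lsub_lsub, Matrix.mul_nonsing_inv _ (isUnit_iff_ne_zero.2 hM), lsub_one]

lemma lsub_inv2 (M : Matrix (Fin 3) (Fin 3) F) (hM : M.det ≠ 0) (f : MvPolynomial (Fin 3) F) :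
    lsub M (lsub M⁻¹ f) = f := by
  rw [lsub_lsub, Matrix.nonsing_inv_mul _ (isUnit_iff_ne_zero.2 hM), lsub_one]

/-- `f` has no linear factor. -/
def NoLine (f : MvPolynomial (Fin 3) F) : Prop :=
  ¬ ∃ l : MvPolynomial (Fin 3) F, l ≠ 0 ∧ l.IsHomogeneous 1 ∧ l ∣ f

lemma NoLine.lineP_ne {f : MvPolynomial (Fin 3) F} (hnl : NoLine f) {d : ℕ}
    (hf : f.IsHomogeneous d) {p v : Fin 3 → F} (h : crossProduct p v ≠ 0) : lineP f p v ≠ 0 := by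
  classical
  intro h0
  obtain ⟨n, hn⟩ := exists_third h
  set M : Matrix (Fin 3) (Fin 3) F := Matrix.of fun i => ![p i, v i, n i] with hM
  have h1 : aeval ![1, Polynomial.X, 0] (lsub M f) = lineP f p v := by
    rw [aeval_lsub, lineP]
    refine congrArg (fun x : Fin 3 → Polynomial F => aeval x f) ?_
    funext i
    simp [hM, Fin.sum_univ_three]
  rw [aeval_line (lsub_hom M hf), h0] at h1
  have h2 : ∀ k ≤ d, coeff (ex (d - k) k 0) (lsub M f) = 0 := by
    intro k hk
    have := congrArg (fun g => Polynomial.coeff g k) h1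
    simp only [one_pow, one_mul, Polynomial.algebraMap_eq, Polynomial.finsetSum_coeff,
      Polynomial.coeff_C_mul_X_pow, Polynomial.coeff_zero] at this
    rw [Finset.sum_ite_eq, if_pos (Finset.mem_range.2 (by omega))] at this
    exact this
  have h3 : X 2 ∣ lsub M f := by
    rw [X_dvd_iff_modMonomial_eq_zero]
    ext s
    rw [coeff_zero]
    by_cases hs : Finsupp.single 2 1 ≤ s
    · exact coeff_modMonomial_of_le _ hs
    · rw [coeff_modMonomial_of_not_le _ hs]
      have hs2 : s 2 = 0 := by
        by_contra hne
        apply hs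
        rw [Finsupp.single_le_iff]; omega
      by_cases hdeg : s 0 + s 1 + s 2 = d
      · have := h2 (s 1) (by omega)
        rwa [show d - s 1 = s 0 by omega, ← hs2, ← ex_eq s] at this
      · exact (lsub_hom M hf).coeff_eq_zero (by rwa [deg_fin3])
  obtain ⟨g, hg⟩ := h3
  refine hnl ⟨lsub M⁻¹ (X 2), ?_, lsub_hom _ (isHomogeneous_X _ _), lsub M⁻¹ g, ?_⟩
  · intro h
    have := lsub_inv2 M hn (X 2)
    rw [h] at this
    simp [lsub] at this
    exact X_ne_zero 2 this.symm
  · rw [← lsub_mul, ← hg, lsub_inv M hn]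

end Basics

section Plane
open Configuration ProjectivePlane Projectivization
open scoped LinearAlgebra.Projectivization
variable {F : Type} [Field F] [Fintype F] [DecidableEq F]

instance ppFintype : Fintype (ℙ F (Fin 3 → F)) :=
  haveI : Finite (ℙ F (Fin 3 → F)) := Projectivization.finite_of_finite F (Fin 3 → F)
  Fintype.ofFinite _

lemma pp_card : Fintype.card (ℙ F (Fin 3 → F)) = Fintype.card F ^ 2 + Fintype.card F + 1 := by
  have := Projectivization.card_of_finrank (k := F) (V := Fin 3 → F) (n := 3) (by simp)
  rw [← Nat.card_eq_fintype_card, this, Finset.sum_range_succ, Finset.sum_range_succ,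
    Finset.sum_range_one, Nat.card_eq_fintype_card]
  ring

lemma pp_order : order (ℙ F (Fin 3 → F)) (ℙ F (Fin 3 → F)) = Fintype.card F := by
  have h := card_points (ℙ F (Fin 3 → F)) (ℙ F (Fin 3 → F))
  rw [pp_card] at h
  nlinarith

lemma mem_iff_dot (X l : ℙ F (Fin 3 → F)) : X ∈ l ↔ dotProduct X.rep l.rep = 0 := by
  rw [ofField.mem_iff]
  conv_lhs => rw [← X.mk_rep, ← l.mk_rep]
  rw [orthogonal_mk]

lemma mk_mem_iff_dot (x : Fin 3 → F) (hx : x ≠ 0) (l : ℙ F (Fin 3 → F)) :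
    mk F x hx ∈ l ↔ dotProduct x l.rep = 0 := by
  rw [ofField.mem_iff]
  conv_lhs => rw [← l.mk_rep]
  rw [orthogonal_mk]

lemma mem_mk_iff_dot (x : Fin 3 → F) (hx : x ≠ 0) (X : ℙ F (Fin 3 → F)) :
    X ∈ mk F x hx ↔ dotProduct X.rep x = 0 := by
  rw [ofField.mem_iff]
  conv_lhs => rw [← X.mk_rep]
  rw [orthogonal_mk]

lemma eval_smul_hom {f : MvPolynomial (Fin 3) F} {d : ℕ} (hf : f.IsHomogeneous d) (a : F)
    (x : Fin 3 → F) : eval (a • x) f = a ^ d * eval x f := by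
  rw [eval_eq', eval_eq', Finset.mul_sum]
  refine Finset.sum_congr rfl fun s hs => ?_
  have := hom_sum hf hs
  simp only [Fin.prod_univ_three, Pi.smul_apply, smul_eq_mul]
  rw [← this]; ring

lemma eval_mk_rep {f : MvPolynomial (Fin 3) F} {d : ℕ} (hf : f.IsHomogeneous d)
    (x : Fin 3 → F) (hx : x ≠ 0) : eval (mk F x hx).rep f = 0 ↔ eval x f = 0 := by
  obtain ⟨a, ha⟩ := exists_smul_eq_mk_rep F x hx
  rw [← ha, Units.smul_def, eval_smul_hom hf]
  simp

lemma cross_ne_of_ne {X Y : ℙ F (Fin 3 → F)} (h : X ≠ Y) : crossProduct X.rep Y.rep ≠ 0 := by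
  intro h0
  rw [← mk_eq_mk_iff_crossProduct_eq_zero X.rep_nonzero Y.rep_nonzero, mk_rep, mk_rep] at h0
  exact h h0

lemma line_param (l P : ℙ F (Fin 3 → F)) (hP : P ∈ l) : ∃ u : Fin 3 → F,
    dotProduct u l.rep = 0 ∧ crossProduct u P.rep ≠ 0 ∧ ∃ φ : F → ℙ F (Fin 3 → F),
    Function.Injective φ ∧ (∀ α, φ α ≠ P ∧ φ α ∈ l ∧
      ∃ h : u + α • P.rep ≠ 0, φ α = mk F (u + α • P.rep) h) ∧
    ∀ X, X ∈ l → X ≠ P → ∃ α, φ α = X := by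
  classical
  obtain ⟨U, hU, hUP⟩ : ∃ U : ℙ F (Fin 3 → F), U ∈ l ∧ U ≠ P := by
    by_contra! h
    have h1 := card_points_on (P := ℙ F (Fin 3 → F)) l
    have h2 := one_lt_order (ℙ F (Fin 3 → F)) (ℙ F (Fin 3 → F))
    have h3 : Finset.card (Finset.univ.filter (fun X : ℙ F (Fin 3 → F) => X ∈ l)) ≤ 1 := by
      rw [Finset.card_le_one]
      intro a ha b hb
      simp only [Finset.mem_filter, Finset.mem_univ, true_and] at ha hb
      rw [h a ha, h b hb]
    omega
  have hc := cross_ne_of_ne hUP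
  set u := U.rep
  set p := P.rep
  rw [mem_iff_dot] at hU hP
  have hne : ∀ α : F, crossProduct (u + α • p) p ≠ 0 := by
    intro α
    rw [map_add, map_smul, LinearMap.add_apply, LinearMap.smul_apply, _root_.cross_self]
    simpa using hc
  have hn0 : ∀ α : F, u + α • p ≠ 0 := by
    intro α h
    apply hne α
    rw [h]; simp
  refine ⟨u, hU, hc, fun α => mk F (u + α • p) (hn0 α), ?_, ?_, ?_⟩
  · intro α β h
    simp only [mk_eq_mk_iff_crossProduct_eq_zero] at h
    have e : crossProduct (u + α • p) (u + β • p) = (β - α) • crossProduct u p := by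
      simp only [map_add, map_smul, LinearMap.add_apply, LinearMap.smul_apply, _root_.cross_self, smul_zero,
        add_zero, zero_add]
      rw [← cross_anticomm u p, sub_smul, smul_neg]
      abel
    rw [e, smul_eq_zero] at h
    rcases h with h | h
    · exact (sub_eq_zero.1 h).symm
    · exact absurd h hc
  · intro α
    refine ⟨?_, ?_, hn0 α, rfl⟩
    · intro h
      rw [← P.mk_rep, mk_eq_mk_iff_crossProduct_eq_zero] at h
      exact hne α h
    · rw [mk_mem_iff_dot, add_dotProduct, smul_dotProduct, hU, hP]; simp
  · intro X hX hXP
    rw [mem_iff_dot] at hX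
    have hdet : (Matrix.of ![X.rep, u, p]).det = 0 := by
      rw [← Matrix.exists_mulVec_eq_zero_iff]
      refine ⟨l.rep, l.rep_nonzero, ?_⟩
      funext i
      fin_cases i
      · exact hX
      · exact hU
      · exact hP
    rw [← Matrix.exists_vecMul_eq_zero_iff] at hdet
    obtain ⟨c, hc0, hcv⟩ := hdet
    have hcomb : c 0 • X.rep + c 1 • u + c 2 • p = 0 := by
      rw [← hcv]
      funext i
      simp [Matrix.vecMul, dotProduct, Fin.sum_univ_three]
    have e1 : c 0 • crossProduct X.rep p + c 1 • crossProduct u p = 0 := by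
      have := congrArg (fun x => crossProduct x p) hcomb
      simpa only [map_add, map_smul, LinearMap.add_apply, LinearMap.smul_apply, _root_.cross_self, smul_zero,
        add_zero, map_zero, LinearMap.zero_apply] using this
    have hXp : crossProduct X.rep p ≠ 0 := cross_ne_of_ne hXP
    have hc1 : c 1 ≠ 0 := by
      intro h1
      rw [h1, zero_smul, add_zero, smul_eq_zero] at e1
      have h0 := e1.resolve_right hXp
      rw [h0, h1] at hcomb
      simp only [zero_smul, zero_add, smul_eq_zero] at hcomb
      have h2 := hcomb.resolve_right P.rep_nonzero
      apply hc0
      funext i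
      fin_cases i
      · exact h0
      · exact h1
      · exact h2
    have hc00 : c 0 ≠ 0 := by
      intro h1
      rw [h1, zero_smul, zero_add, smul_eq_zero] at e1
      exact e1.elim hc1 hc
    refine ⟨c 2 / c 1, ?_⟩
    rw [← X.mk_rep, mk_eq_mk_iff']
    refine ⟨- (c 0 / c 1), ?_⟩
    have : c 1 • (-(c 0 / c 1) • X.rep) = c 1 • (u + (c 2 / c 1) • p) := by
      rw [smul_smul, smul_add, smul_smul]
      rw [show c 1 * -(c 0 / c 1) = - c 0 by field_simp, show c 1 * (c 2 / c 1) = c 2 by field_simp]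
      rw [neg_smul, eq_comm, ← sub_eq_zero]
      rw [← hcomb]; abel
    exact smul_right_injective _ hc1 this

/-- rational points of the curve -/
def zf (f : MvPolynomial (Fin 3) F) : Finset (ℙ F (Fin 3 → F)) :=
  Finset.univ.filter (fun X => eval X.rep f = 0)

lemma mem_zf (f : MvPolynomial (Fin 3) F) (X : ℙ F (Fin 3 → F)) : X ∈ zf f ↔ eval X.rep f = 0 := by
  simp [zf]

/-- gradient -/
def grad (f : MvPolynomial (Fin 3) F) (p : Fin 3 → F) : Fin 3 → F := fun i => eval p (pderiv i f)

lemma lineP_coeff_one' (f : MvPolynomial (Fin 3) F) (p v : Fin 3 → F) :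
    (lineP f p v).coeff 1 = dotProduct v (grad f p) := lineP_coeff_one f p v

lemma euler_grad {f : MvPolynomial (Fin 3) F} {d : ℕ} (hf : f.IsHomogeneous d) (p : Fin 3 → F)
    (hp : eval p f = 0) : dotProduct p (grad f p) = 0 := by
  have := congrArg (eval p) hf.sum_X_mul_pderiv
  simp only [map_sum, map_mul, eval_X, map_nsmul, hp, smul_zero] at this
  exact this

open Classical in
lemma tnum_eq (S : Finset (ℙ F (Fin 3 → F))) (l : ℙ F (Fin 3 → F)) :
    tnum S l = (S.filter (fun X => X ∈ l)).card := rfl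

open scoped Classical in
/-- bound of the number of zeros on a line away from `P`. -/
lemma zeros_erase {f : MvPolynomial (Fin 3) F} {d : ℕ} (hf : f.IsHomogeneous d) (hnl : NoLine f)
    (l P : ℙ F (Fin 3 → F)) (hP : P ∈ l) : ∃ u : Fin 3 → F, dotProduct u l.rep = 0 ∧
     crossProduct u P.rep ≠ 0 ∧
     (((zf f).filter (fun X => X ∈ l ∧ X ≠ P))).card ≤ (lineP f u P.rep).natDegree := by
  classical
  obtain ⟨u, hu, hc, φ, hφ, h1, h2⟩ := line_param l P hP
  refine ⟨u, hu, hc, ?_⟩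
  have hne := hnl.lineP_ne hf hc
  have : (zf f).filter (fun X => X ∈ l ∧ X ≠ P) ⊆ (lineP f u P.rep).roots.toFinset.image φ := by
    intro X hX
    rw [Finset.mem_filter, mem_zf] at hX
    obtain ⟨α, rfl⟩ := h2 X hX.2.1 hX.2.2
    apply Finset.mem_image_of_mem
    rw [Multiset.mem_toFinset, Polynomial.mem_roots hne, Polynomial.IsRoot, lineP_eval]
    obtain ⟨-, -, h, e⟩ := h1 α
    have := hX.1
    rwa [e, eval_mk_rep hf] at this
  refine (Finset.card_le_card this).trans (Finset.card_image_le.trans ?_)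
  exact (Multiset.toFinset_card_le _).trans (Polynomial.card_roots' _)

lemma natDegree_le_of_zero {f : MvPolynomial (Fin 3) F} {d : ℕ} (hf : f.IsHomogeneous d)
    (hd : 1 ≤ d) (u p : Fin 3 → F) (h : eval p f = 0) : (lineP f u p).natDegree ≤ d - 1 := by
  rw [Polynomial.natDegree_le_iff_coeff_eq_zero]
  intro k hk
  by_cases hkd : k = d
  · rw [hkd, lineP_coeff_top hf, h]
  · exact Polynomial.coeff_eq_zero_of_natDegree_lt ((lineP_natDegree hf u p).trans_lt (by omega))

lemma natDegree_le_of_tangent {f : MvPolynomial (Fin 3) F} {d : ℕ} (hf : f.IsHomogeneous d)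
    (hd : 2 ≤ d) (u p : Fin 3 → F) (h : eval p f = 0) (h2 : dotProduct u (grad f p) = 0) :
    (lineP f u p).natDegree ≤ d - 2 := by
  have h3 := natDegree_le_of_zero hf (by omega) u p h
  rw [Polynomial.natDegree_le_iff_coeff_eq_zero]
  intro k hk
  by_cases hkd : k = d - 1
  · rw [hkd, lineP_swap hf p u (by omega), show d - (d - 1) = 1 by omega, lineP_coeff_one', h2]
  · exact Polynomial.coeff_eq_zero_of_natDegree_lt (h3.trans_lt (by omega))

lemma singular_bound {f : MvPolynomial (Fin 3) F} {d : ℕ} (hf : f.IsHomogeneous d) (hnl : NoLine f)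
    (hd : 2 ≤ d) (P : ℙ F (Fin 3 → F)) (hP : P ∈ zf f) (hg : grad f P.rep = 0) :
    (zf f).card ≤ 1 + (Fintype.card F + 1) * (d - 2) := by
  classical
  rw [mem_zf] at hP
  have h1 : zf f ⊆ {P} ∪ (Finset.univ.filter (fun l : ℙ F (Fin 3 → F) => P ∈ l)).biUnion
      (fun l => (zf f).filter (fun X => X ∈ l ∧ X ≠ P)) := by
    intro X hX
    by_cases hXP : X = P
    · simp [hXP]
    · rw [Finset.mem_union, Finset.mem_biUnion]
      right
      obtain ⟨l, hl1, hl2⟩ := exists_join (L := ℙ F (Fin 3 → F)) X P hXP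
      exact ⟨l, by simpa using hl2, Finset.mem_filter.2 ⟨hX, hl1, hXP⟩⟩
  refine (Finset.card_le_card h1).trans ((Finset.card_union_le _ _).trans ?_)
  rw [Finset.card_singleton]
  gcongr
  have h2 := card_lines_through (L := ℙ F (Fin 3 → F)) P
  rw [pp_order] at h2
  rw [← h2]
  apply Finset.card_biUnion_le_card_mul
  intro l hl
  rw [Finset.mem_filter] at hl
  obtain ⟨u, hu, hc, h⟩ := zeros_erase hf hnl l P hl.2
  refine h.trans ?_
  apply natDegree_le_of_tangent hf hd _ _ hP
  rw [hg]; simp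

end Plane

section QPlusOne
open Configuration ProjectivePlane Projectivization
open scoped LinearAlgebra.Projectivization
variable {F : Type} [Field F] [Fintype F] [DecidableEq F]

lemma lineP_deriv (f : MvPolynomial (Fin 3) F) (u p : Fin 3 → F) (a : F) :
    (lineP f u p).derivative.eval a = dotProduct p (grad f (u + a • p)) := by
  rw [← lineP_coeff_one', ← Polynomial.taylor_coeff_one]
  congr 1
  rw [lineP, Polynomial.taylor_apply]
  have : ∀ g : Polynomial F, g.comp (Polynomial.X + Polynomial.C a) =
      Polynomial.aeval (Polynomial.X + Polynomial.C a) g := fun g => rfl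
  rw [this, comp_aeval_apply, lineP]
  refine congrArg (fun x : Fin 3 → Polynomial F => aeval x f) ?_
  funext i
  simp only [map_add, map_mul, Polynomial.aeval_C, Polynomial.aeval_X, Pi.add_apply, Pi.smul_apply,
    smul_eq_mul, Polynomial.algebraMap_eq]
  ring

lemma grad_smul {f : MvPolynomial (Fin 3) F} {d : ℕ} (hf : f.IsHomogeneous d) (a : F)
    (x : Fin 3 → F) : grad f (a • x) = a ^ (d - 1) • grad f x := by
  funext i
  simp only [grad, Pi.smul_apply, smul_eq_mul]
  exact eval_smul_hom hf.pderiv a x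

/-- complement of the curve -/
def nzf (f : MvPolynomial (Fin 3) F) : Finset (ℙ F (Fin 3 → F)) :=
  Finset.univ.filter (fun X => eval X.rep f ≠ 0)

lemma mem_nzf (f : MvPolynomial (Fin 3) F) (X : ℙ F (Fin 3 → F)) : X ∈ nzf f ↔ X ∉ zf f := by
  simp [zf, nzf]

lemma card_zf_add (f : MvPolynomial (Fin 3) F) :
    (zf f).card + (nzf f).card = Fintype.card F ^ 2 + Fintype.card F + 1 := by
  rw [← pp_card, zf, nzf, Finset.card_filter_add_card_filter_not, Finset.card_univ]

lemma tnum_compl (f : MvPolynomial (Fin 3) F) (l : ℙ F (Fin 3 → F)) :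
    tnum (zf f) l + tnum (nzf f) l = Fintype.card F + 1 := by
  classical
  rw [← pp_order, ← card_points_on (P := ℙ F (Fin 3 → F)) l, tnum, tnum]
  rw [← Finset.card_union_of_disjoint]
  · congr 1
    ext X
    simp only [Finset.mem_union, Finset.mem_filter, mem_nzf, Finset.mem_univ]
    tauto
  · rw [Finset.disjoint_left]
    intro X h1 h2
    simp only [Finset.mem_filter, mem_nzf] at h1 h2
    exact h2.1 h1.1

lemma tnum_le_erase (f : MvPolynomial (Fin 3) F) (l P : ℙ F (Fin 3 → F)) {k : ℕ}
    (h : ∀ [DecidablePred fun X : ℙ F (Fin 3 → F) => X ∈ l ∧ X ≠ P],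
      (((zf f).filter (fun X => X ∈ l ∧ X ≠ P))).card ≤ k) : tnum (zf f) l ≤ k + 1 := by
  classical
  have : (zf f).filter (fun X => X ∈ l) ⊆ insert P ((zf f).filter (fun X => X ∈ l ∧ X ≠ P)) := by
    intro X hX
    rw [Finset.mem_filter] at hX
    rw [Finset.mem_insert, Finset.mem_filter]
    tauto
  have h2 := (Finset.card_le_card this).trans (Finset.card_insert_le _ _)
  have h3 := h
  rw [tnum]
  omega

/-- a line through a rational point contains at most `d` rational points -/
lemma tnum_le {f : MvPolynomial (Fin 3) F} {d : ℕ} (hf : f.IsHomogeneous d) (hnl : NoLine f)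
    (hd : 1 ≤ d) (l P : ℙ F (Fin 3 → F)) (hP : P ∈ l) (hPf : P ∈ zf f) : tnum (zf f) l ≤ d := by
  obtain ⟨u, hu, hc, h⟩ := zeros_erase hf hnl l P hP
  have := tnum_le_erase f l P (k := d - 1) (by
    intro _
    refine le_trans ?_ (h.trans (natDegree_le_of_zero hf hd u P.rep ((mem_zf _ _).1 hPf)))
    apply le_of_eq; congr!)
  omega

lemma tnum_le_tangent {f : MvPolynomial (Fin 3) F} {d : ℕ} (hf : f.IsHomogeneous d) (hnl : NoLine f)
    (hd : 2 ≤ d) (l P : ℙ F (Fin 3 → F)) (hP : P ∈ l) (hPf : P ∈ zf f)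
    (ht : ∃ c : F, grad f P.rep = c • l.rep) : tnum (zf f) l ≤ d - 1 := by
  obtain ⟨u, hu, hc, h⟩ := zeros_erase hf hnl l P hP
  obtain ⟨c, hc⟩ := ht
  have := tnum_le_erase f l P (k := d - 2) (by
    intro _
    refine le_trans ?_ (h.trans (natDegree_le_of_tangent hf hd u P.rep ((mem_zf _ _).1 hPf) ?_))
    · apply le_of_eq; congr!
    · rw [hc, dotProduct_smul, hu, smul_zero])
  omega

lemma mk_grad_spec {v : Fin 3 → F} (hv : v ≠ 0) : ∃ c : F, v = c • (mk F v hv).rep := by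
  obtain ⟨a, ha⟩ := exists_smul_eq_mk_rep F v hv
  refine ⟨(a⁻¹ : Fˣ), ?_⟩
  rw [← ha, Units.smul_def, smul_smul]; simp

open scoped Classical in
lemma fiber_le {f : MvPolynomial (Fin 3) F} (hf : f.IsHomogeneous (Fintype.card F + 1))
    (hnl : NoLine f) (T : ℙ F (Fin 3 → F) → ℙ F (Fin 3 → F))
    (hT : ∀ P ∈ zf f, ∃ c : F, grad f P.rep = c • (T P).rep) (hT2 : ∀ P ∈ zf f, P ∈ T P)
    (l : ℙ F (Fin 3 → F)) : ((zf f).filter (fun P => T P = l)).card ≤ tnum (nzf f) l := by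
  classical
  have hq : 1 < Fintype.card F := Fintype.one_lt_card
  have hcomp := tnum_compl f l
  rcases Nat.eq_zero_or_pos (tnum (nzf f) l) with h0 | hpos
  · rw [h0]
    rw [Nat.le_zero, Finset.card_eq_zero, Finset.filter_eq_empty_iff]
    intro P hP hPl
    have h1 := hT2 P hP
    have h2 := hT P hP
    rw [hPl] at h1 h2
    have := tnum_le_tangent hf hnl (by omega) l P h1 hP h2
    omega
  · obtain ⟨R, hR⟩ := Finset.card_pos.1 (show 0 < ((nzf f).filter (fun X => X ∈ l)).card from hpos)
    rw [Finset.mem_filter, mem_nzf] at hR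
    obtain ⟨u, hu, hc, φ, hφ, h1, h2⟩ := line_param l R hR.2
    have hne := hnl.lineP_ne hf hc
    set A : Finset F := Finset.univ.filter (fun α => φ α ∈ zf f) with hA
    set B : Finset F := Finset.univ.filter (fun α => φ α ∈ zf f ∧ T (φ α) = l) with hB
    have cA : tnum (zf f) l ≤ A.card := by
      rw [tnum, ← Finset.card_image_of_injective A hφ]
      apply Finset.card_le_card
      intro X hX
      rw [Finset.mem_filter] at hX
      obtain ⟨α, rfl⟩ := h2 X hX.2 (fun h => hR.1 (h ▸ hX.1))
      exact Finset.mem_image_of_mem _ (by simpa [hA] using hX.1)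
    have cB : ((zf f).filter (fun P => T P = l)).card ≤ B.card := by
      rw [← Finset.card_image_of_injective B hφ]
      apply Finset.card_le_card
      intro X hX
      rw [Finset.mem_filter] at hX
      obtain ⟨α, rfl⟩ := h2 X (by rw [← hX.2]; exact hT2 X hX.1) (fun h => hR.1 (h ▸ hX.1))
      exact Finset.mem_image_of_mem _ (by simpa [hB] using hX)
    have hle : A.val + B.val ≤ (lineP f u R.rep).roots := by
      rw [Multiset.le_iff_count]
      intro α
      rw [Multiset.count_add, Polynomial.count_roots]
      have hroot : φ α ∈ zf f → (lineP f u R.rep).IsRoot α := by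
        intro h
        obtain ⟨-, -, h0, e⟩ := h1 α
        rw [mem_zf, e, eval_mk_rep hf] at h
        rw [Polynomial.IsRoot, lineP_eval, h]
      by_cases hαA : α ∈ A
      · have hz : φ α ∈ zf f := by simpa [hA] using hαA
        by_cases hαB : α ∈ B
        · have hz2 : T (φ α) = l := by
            have : φ α ∈ zf f ∧ T (φ α) = l := by simpa [hB] using hαB
            exact this.2
          rw [Multiset.count_eq_one_of_mem A.nodup hαA, Multiset.count_eq_one_of_mem B.nodup hαB]
          have := (Polynomial.one_lt_rootMultiplicity_iff_isRoot hne).2 ⟨hroot hz, ?_⟩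
          · omega
          · rw [Polynomial.IsRoot, lineP_deriv]
            obtain ⟨-, -, h0, e⟩ := h1 α
            obtain ⟨c, hcg⟩ := hT _ hz
            obtain ⟨a, ha⟩ := exists_smul_eq_mk_rep F _ h0
            rw [hz2, e, ← ha, Units.smul_def, grad_smul hf] at hcg
            have := congrArg (fun x => dotProduct R.rep x) hcg
            simp only [dotProduct_smul, (mem_iff_dot R l).1 hR.2, smul_zero] at this
            exact (smul_eq_zero.1 this).resolve_left (pow_ne_zero _ a.ne_zero)
        · rw [Multiset.count_eq_one_of_mem A.nodup hαA, Multiset.count_eq_zero_of_notMem hαB]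
          have := (Polynomial.rootMultiplicity_pos hne).2 (hroot hz)
          omega
      · have hαB : α ∉ B := by
          intro h
          apply hαA
          simp only [hA, hB, Finset.mem_filter, Finset.mem_univ, true_and] at h ⊢
          exact h.1
        rw [Multiset.count_eq_zero_of_notMem hαA, Multiset.count_eq_zero_of_notMem hαB]
        omega
    have h5 := Multiset.card_le_card hle
    rw [Multiset.card_add] at h5
    have h6 := (Polynomial.card_roots' (lineP f u R.rep)).trans (lineP_natDegree hf u R.rep)
    simp only [Finset.card_val] at h5
    omega

lemma case_q_plus_one {f : MvPolynomial (Fin 3) F} (hf : f.IsHomogeneous (Fintype.card F + 1))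
    (hnl : NoLine f) : (zf f).card ≤ Fintype.card F * Fintype.card F + 1 := by
  classical
  have hq : 1 < Fintype.card F := Fintype.one_lt_card
  by_cases hs : ∃ P ∈ zf f, grad f P.rep = 0
  · obtain ⟨P, hP, hg⟩ := hs
    refine (singular_bound hf hnl (by omega) P hP hg).trans ?_
    obtain ⟨k, hk⟩ : ∃ k, Fintype.card F = k + 1 := ⟨Fintype.card F - 1, by omega⟩
    rw [hk]
    rw [show k + 1 + 1 - 2 = k by omega]
    nlinarith
  · push Not at hs
    set T : ℙ F (Fin 3 → F) → ℙ F (Fin 3 → F) := fun P =>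
      if h : grad f P.rep = 0 then P else mk F (grad f P.rep) h with hTdef
    have hT1 : ∀ P ∈ zf f, ∃ h : grad f P.rep ≠ 0, T P = mk F (grad f P.rep) h := by
      intro P hP
      refine ⟨hs P hP, ?_⟩
      rw [hTdef]; simp only; rw [dif_neg (hs P hP)]
    have hT : ∀ P ∈ zf f, ∃ c : F, grad f P.rep = c • (T P).rep := by
      intro P hP
      obtain ⟨h, e⟩ := hT1 P hP
      rw [e]; exact mk_grad_spec h
    have hT2 : ∀ P ∈ zf f, P ∈ T P := by
      intro P hP
      obtain ⟨h, e⟩ := hT1 P hP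
      rw [e, mem_mk_iff_dot]
      exact euler_grad hf _ ((mem_zf _ _).1 hP)
    have h1 : (zf f).card = ∑ l, ((zf f).filter (fun P => T P = l)).card :=
      Finset.card_eq_sum_card_fiberwise (by intro x _; simp)
    have h2 : (zf f).card ≤ (nzf f).card * (Fintype.card F + 1) := by
      rw [← pp_order, ← sum_tnum, h1]
      exact Finset.sum_le_sum fun l _ => fiber_le hf hnl T hT hT2 l
    have h3 := card_zf_add f
    by_contra! h4
    nlinarith

end QPlusOne

section CaseQ
open Configuration ProjectivePlane Projectivization
open scoped LinearAlgebra.Projectivization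
variable {F : Type} [Field F] [Fintype F] [DecidableEq F]

lemma eval_mk_rep_eq {g : MvPolynomial (Fin 3) F} {e : ℕ} (hg : g.IsHomogeneous e)
    (he : Fintype.card F - 1 ∣ e) (x : Fin 3 → F) (hx : x ≠ 0) :
    eval (mk F x hx).rep g = eval x g := by
  obtain ⟨a, ha⟩ := exists_smul_eq_mk_rep F x hx
  obtain ⟨m, rfl⟩ := he
  rw [← ha, Units.smul_def, eval_smul_hom hg, pow_mul, FiniteField.pow_card_sub_one_eq_one _ a.ne_zero]
  simp

lemma sum_proj {g : MvPolynomial (Fin 3) F} {e : ℕ} (hg : g.IsHomogeneous e)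
    (he : Fintype.card F - 1 ∣ e) (he0 : e ≠ 0) (he2 : e < (Fintype.card F - 1) * 3) :
    ∑ X : ℙ F (Fin 3 → F), eval X.rep g = 0 := by
  have h1 : ∑ x : Fin 3 → F, eval x g = 0 := by
    apply sum_eval_eq_zero
    refine lt_of_le_of_lt hg.totalDegree_le ?_
    simpa using he2
  rw [← Finset.add_sum_erase _ _ (Finset.mem_univ 0)] at h1
  have h0 : eval (0 : Fin 3 → F) g = 0 := by
    have := eval_smul_hom hg 0 (0 : Fin 3 → F)
    rwa [zero_smul, zero_pow he0, zero_mul] at this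
  rw [h0, zero_add] at h1
  have h2 : ∑ y : ℙ F (Fin 3 → F) × Fˣ, eval y.1.rep g =
      ∑ x ∈ Finset.univ.erase (0 : Fin 3 → F), eval x g := by
    apply Finset.sum_bij (fun y _ => (y.2 : F) • y.1.rep)
    · intro y _
      simp [y.1.rep_nonzero]
    · rintro ⟨X, a⟩ _ ⟨Y, b⟩ _ h
      simp only at h
      have hXY : X = Y := by
        rw [← X.mk_rep, ← Y.mk_rep, mk_eq_mk_iff']
        refine ⟨(a : F)⁻¹ * b, ?_⟩
        rw [mul_smul, ← h, smul_smul]; simp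
      subst hXY
      have := smul_left_injective F X.rep_nonzero h
      rw [Prod.mk.injEq]
      exact ⟨rfl, Units.ext this⟩
    · intro x hx
      have hx0 : x ≠ 0 := Finset.ne_of_mem_erase hx
      obtain ⟨a, ha⟩ := exists_smul_eq_mk_rep F x hx0
      refine ⟨(mk F x hx0, a⁻¹), Finset.mem_univ _, ?_⟩
      simp only
      rw [← ha, Units.smul_def, smul_smul]; simp
    · rintro ⟨X, a⟩ _
      obtain ⟨m, rfl⟩ := he
      simp only
      rw [eval_smul_hom hg, pow_mul, FiniteField.pow_card_sub_one_eq_one _ a.ne_zero]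
      simp
  rw [← h2, Fintype.sum_prod_type] at h1
  simp only [Finset.sum_const, Finset.card_univ] at h1
  rw [← Finset.smul_sum, Fintype.card_units, nsmul_eq_mul] at h1
  have hq : (1 : ℕ) ≤ Fintype.card F := Fintype.card_pos
  rw [Nat.cast_sub hq] at h1
  simpa using h1

/-- the linear form of a line -/
def lform (l : Fin 3 → F) : MvPolynomial (Fin 3) F := ∑ i, C (l i) * X i

lemma lform_hom (l : Fin 3 → F) : (lform l).IsHomogeneous 1 :=
  IsHomogeneous.sum _ _ _ fun j _ => isHomogeneous_C_mul_X _ _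

lemma eval_lform (l x : Fin 3 → F) : eval x (lform l) = dotProduct x l := by
  simp [lform, dotProduct, mul_comm]

lemma list_prod_hom (T : List (ℙ F (Fin 3 → F))) :
    ((T.map (fun l => lform l.rep)).prod).IsHomogeneous T.length := by
  induction T with
  | nil => simpa using isHomogeneous_one _ _
  | cons l T ih =>
    simp only [List.map_cons, List.prod_cons, List.length_cons]
    rw [add_comm]
    exact (lform_hom _).mul ih

lemma eval_list_prod (T : List (ℙ F (Fin 3 → F))) (X : ℙ F (Fin 3 → F)) :
    eval X.rep ((T.map (fun l => lform l.rep)).prod) = 0 ↔ ∃ l ∈ T, X ∈ l := by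
  induction T with
  | nil => simp
  | cons l T ih =>
    simp only [List.map_cons, List.prod_cons, map_mul, mul_eq_zero, ih, eval_lform,
      List.mem_cons, exists_eq_or_imp, mem_iff_dot]

lemma exists_point_ne (R : ℙ F (Fin 3 → F)) : ∃ X : ℙ F (Fin 3 → F), X ≠ R := by
  by_contra! h
  have : Fintype.card (ℙ F (Fin 3 → F)) ≤ 1 := Fintype.card_le_one_iff.2 fun a b => by rw [h a, h b]
  rw [pp_card] at this
  have hq : 1 < Fintype.card F := Fintype.one_lt_card
  omega

lemma nzf_CB {f : MvPolynomial (Fin 3) F} (hf : f.IsHomogeneous (Fintype.card F)) :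
    CBcond (ℙ F (Fin 3 → F)) (ℙ F (Fin 3 → F)) (Fintype.card F - 2) (nzf f) := by
  intro R hR T hT hRT
  by_contra! hcon
  have hq : 1 < Fintype.card F := Fintype.one_lt_card
  obtain ⟨X, hX⟩ := exists_point_ne R
  obtain ⟨m, -, hm⟩ := exists_line_avoid (L := ℙ F (Fin 3 → F)) X R hX
  set g := f * ((T.map (fun l => lform l.rep)).prod * lform m.rep ^ (Fintype.card F - 2 - T.length))
    with hg
  have hgh : g.IsHomogeneous (Fintype.card F + (T.length + 1 * (Fintype.card F - 2 - T.length))) :=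
    hf.mul ((list_prod_hom T).mul ((lform_hom _).pow _))
  rw [show Fintype.card F + (T.length + 1 * (Fintype.card F - 2 - T.length)) =
    (Fintype.card F - 1) * 2 by omega] at hgh
  have := sum_proj hgh (Dvd.intro _ rfl) (by omega) (by omega)
  rw [Finset.sum_eq_single R] at this
  · rw [hg, map_mul, map_mul, map_pow, mul_eq_zero, mul_eq_zero] at this
    rcases this with h | h | h
    · rw [mem_nzf, mem_zf] at hR; exact hR h
    · rw [eval_list_prod] at h
      obtain ⟨l, hl, hl2⟩ := h
      exact hRT l hl hl2
    · have h2 := eq_zero_of_pow_eq_zero h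
      rw [eval_lform, ← mem_iff_dot] at h2
      exact hm h2
  · intro Y _ hY
    rw [hg, map_mul, map_mul]
    by_cases hYS : Y ∈ nzf f
    · rw [(eval_list_prod T Y).2 (hcon Y hYS hY)]; simp
    · rw [mem_nzf, not_not, mem_zf] at hYS
      rw [hYS, zero_mul]
  · simp

lemma nzf_block {f : MvPolynomial (Fin 3) F} (hf : f.IsHomogeneous (Fintype.card F))
    (hnl : NoLine f) (l : ℙ F (Fin 3 → F)) : 1 ≤ tnum (nzf f) l := by
  classical
  by_contra! h
  have h1 := tnum_compl f l
  have hq : 1 < Fintype.card F := Fintype.one_lt_card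
  obtain ⟨P, hP⟩ := Finset.card_pos.1 (show 0 < ((zf f).filter (fun X => X ∈ l)).card by
    rw [← tnum_eq]; omega)
  rw [Finset.mem_filter] at hP
  have := tnum_le hf hnl (by omega) l P hP.2 hP.1
  omega

lemma nzf_tan {f : MvPolynomial (Fin 3) F} (hf : f.IsHomogeneous (Fintype.card F))
    (hnl : NoLine f) (X : ℙ F (Fin 3 → F)) (hX : X ∉ nzf f) :
    ∃ l : ℙ F (Fin 3 → F), X ∈ l ∧ 2 ≤ tnum (nzf f) l := by
  classical
  have hq : 1 < Fintype.card F := Fintype.one_lt_card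
  rw [mem_nzf, not_not] at hX
  obtain ⟨l, hl, hl2⟩ : ∃ l : ℙ F (Fin 3 → F), X ∈ l ∧ ∃ c : F, grad f X.rep = c • l.rep := by
    by_cases hg : grad f X.rep = 0
    · obtain ⟨l, hl, -⟩ := exists_line_avoid2 (L := ℙ F (Fin 3 → F)) X X X
      exact ⟨l, hl, 0, by simp [hg]⟩
    · refine ⟨mk F _ hg, ?_, mk_grad_spec hg⟩
      rw [mem_mk_iff_dot]
      exact euler_grad hf _ ((mem_zf _ _).1 hX)
  refine ⟨l, hl, ?_⟩
  have := tnum_le_tangent hf hnl (by omega) l X hl hX hl2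
  have h1 := tnum_compl f l
  omega

lemma case_q_struct {f : MvPolynomial (Fin 3) F} (hf : f.IsHomogeneous (Fintype.card F))
    (hnl : NoLine f) : (zf f).card ≤ (Fintype.card F - 1) * Fintype.card F + 1 ∨
    (Fintype.card F = 4 ∧ (nzf f).card = 7 ∧ ∀ l : ℙ F (Fin 3 → F), tnum (nzf f) l = 1 ∨ tnum (nzf f) l = 3) := by
  by_contra! hcon
  have hq : 1 < Fintype.card F := Fintype.one_lt_card
  have h1 := card_zf_add f
  have h2 : (nzf f).card + 1 ≤ 2 * Fintype.card F := by
    have := hcon.1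
    obtain ⟨k, hk⟩ : ∃ k, Fintype.card F = k + 1 := ⟨Fintype.card F - 1, by omega⟩
    rw [hk] at this h1 ⊢
    simp only [Nat.add_sub_cancel] at this
    nlinarith
  have hb := nzf_block hf hnl
  have hcb := nzf_CB hf
  have ho := pp_order (F := F)
  rw [← ho] at hcb h2
  rcases blocking_struct hb h2 hcb with ⟨l, m, hlm⟩ | ⟨a, b, c⟩
  · exact blocking_twolines hb h2 hcb (nzf_tan hf hnl) l m hlm
  · obtain ⟨l, hl1, hl2⟩ := hcon.2 (by rw [← ho]; exact a) b
    rcases c l with h | h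
    · exact hl1 h
    · exact hl2 h

end CaseQ

section Exceptional
open Configuration ProjectivePlane Projectivization
open scoped LinearAlgebra.Projectivization
variable {F : Type} [Field F] [Fintype F] [DecidableEq F]

lemma two_zero (h4 : Fintype.card F = 4) : (2 : F) = 0 := by
  have h := FiniteField.cast_card_eq_zero F
  rw [h4] at h
  have : (2 : F) * 2 = 0 := by rw [← h]; norm_num
  rcases mul_eq_zero.1 this with h | h <;> exact h

lemma K_eval (h2 : (2 : F) = 0) (x : Fin 3 → F) : eval x (hommaKimQuartic F) =
    (x 0 + x 1 + x 2) ^ 4 + (x 0 * x 1 + x 1 * x 2 + x 2 * x 0) ^ 2 +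
      x 0 * x 1 * x 2 * (x 0 + x 1 + x 2) := by
  simp only [hommaKimQuartic, map_add, map_mul, map_pow, eval_X]
  generalize x 0 = a; generalize x 1 = b; generalize x 2 = c
  linear_combination (-(a^2*b^2*3+ a^2*c^2*3 + b^2*c^2*3 + 2*a^3*b+2*a*b^3+2*a^3*c+2*a*c^3+2*b^3*c+2*b*c^3
    +7*a^2*b*c + 7*a*b^2*c+7*a*b*c^2)) * h2

lemma K_hom : (hommaKimQuartic F).IsHomogeneous 4 := by
  have hX : ∀ i : Fin 3, (X i : MvPolynomial (Fin 3) F).IsHomogeneous 1 := fun i => isHomogeneous_X _ _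
  have h4 : ∀ i : Fin 3, (X i ^ 4 : MvPolynomial (Fin 3) F).IsHomogeneous 4 := fun i => (hX i).pow 4
  have h22 : ∀ i j : Fin 3, (X i ^ 2 * X j ^ 2 : MvPolynomial (Fin 3) F).IsHomogeneous 4 :=
    fun i j => ((hX i).pow 2).mul ((hX j).pow 2)
  have a : (X 0 ^ 2 * X 1 * X 2 : MvPolynomial (Fin 3) F).IsHomogeneous 4 :=
    (((hX 0).pow 2).mul (hX 1)).mul (hX 2)
  have b : (X 0 * X 1 ^ 2 * X 2 : MvPolynomial (Fin 3) F).IsHomogeneous 4 :=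
    (((hX 0)).mul ((hX 1).pow 2)).mul (hX 2)
  have c : (X 0 * X 1 * X 2 ^ 2 : MvPolynomial (Fin 3) F).IsHomogeneous 4 :=
    (((hX 0)).mul (hX 1)).mul ((hX 2).pow 2)
  exact ((((((((h4 0).add (h4 1)).add (h4 2)).add (h22 0 1)).add (h22 1 2)).add (h22 2 0)).add a).add
    b).add c

/-- zero-one vectors -/
def bv (b : Fin 3 → Bool) : Fin 3 → F := fun i => if b i then 1 else 0

/-- index type of nonzero zero-one vectors -/
abbrev BI := {b : Fin 3 → Bool // b ≠ fun _ => false}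

lemma card_BI : Fintype.card BI = 7 := by decide

lemma bv_ne (b : BI) : bv (F := F) b.1 ≠ 0 := by
  intro h
  apply b.2
  funext i
  have := congrFun h i
  by_contra hb
  simp only [Bool.not_eq_false] at hb
  simp [bv, hb] at this

lemma bv_smul_inj (b b' : BI) (a : F) (h : (bv b.1 : Fin 3 → F) = a • bv b'.1) : b = b' := by
  have ha : a ≠ 0 := by
    rintro rfl
    exact bv_ne (F := F) b (by rw [h, zero_smul])
  apply Subtype.ext
  funext i
  have := congrFun h i
  simp only [bv, Pi.smul_apply, smul_eq_mul] at this
  cases h1 : b.1 i <;> cases h2 : b'.1 i <;> simp_all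

lemma K_bv (h2 : (2 : F) = 0) (b : BI) : eval (bv b.1) (hommaKimQuartic F) = 1 := by
  rw [K_eval h2]
  have h := bv_ne (F := F) b
  obtain ⟨b, hb⟩ := b
  have hb' : ¬ (b 0 = false ∧ b 1 = false ∧ b 2 = false) := by
    rintro ⟨h0, h1, h2⟩
    apply hb
    funext i
    fin_cases i <;> assumption
  have e1 : (1 : F) + 1 = 0 := by linear_combination h2
  have e (i) : (bv b i : F) = if b i then 1 else 0 := rfl
  rw [e, e, e]
  clear h hb e
  rcases Bool.eq_false_or_eq_true (b 0) with h0 | h0 <;>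
  rcases Bool.eq_false_or_eq_true (b 1) with h1 | h1 <;>
  rcases Bool.eq_false_or_eq_true (b 2) with h3 | h3 <;> simp [h0, h1, h3, e1] at hb' ⊢

lemma K_ne (h4 : Fintype.card F = 4) (x : Fin 3 → F) (hx : eval x (hommaKimQuartic F) ≠ 0) :
    ∃ (b : BI) (a : F), a ≠ 0 ∧ x = a • bv b.1 := by
  have h2 := two_zero h4
  rw [K_eval h2] at hx
  have hcube : ∀ a : F, a ≠ 0 → a ^ 3 = 1 := by
    intro a ha
    have := FiniteField.pow_card_sub_one_eq_one a ha
    rwa [h4] at this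
  have key : ∀ a b : F, a ≠ 0 → b ≠ 0 → a ≠ b → a ^ 2 + a * b + b ^ 2 = 0 := by
    intro a b ha hb hab
    have : (a - b) * (a ^ 2 + a * b + b ^ 2) = 0 := by
      have e1 := hcube a ha
      have e2 := hcube b hb
      linear_combination e1 - e2
    exact (mul_eq_zero.1 this).resolve_left (sub_ne_zero.2 hab)
  have fin : ∀ (a : F), a ≠ 0 → (∀ i, x i = 0 ∨ x i = a) → x ≠ 0 →
      ∃ (b : BI) (a : F), a ≠ 0 ∧ x = a • bv b.1 := by
    intro a ha h hx0
    refine ⟨⟨fun i => decide (x i ≠ 0), ?_⟩, a, ha, ?_⟩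
    · intro hb
      apply hx0
      funext i
      have := congrFun hb i
      simpa using this
    · funext i
      rcases h i with h | h
      · simp [bv, h]
      · simp [bv, h, ha]
  have hx0 : x ≠ 0 := by
    rintro rfl
    apply hx; simp
  have mk3 : ∀ P : Fin 3 → Prop, P 0 → P 1 → P 2 → ∀ i, P i := by
    intro P h0 h1 h2 i
    fin_cases i <;> assumption
  generalize hx' : x 0 = a at *
  generalize hy' : x 1 = b at *
  generalize hz' : x 2 = c at *
  -- pairwise: two nonzero coordinates
  by_cases ha : a = 0
  · by_cases hb : b = 0
    · by_cases hc : c = 0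
      · subst ha hb hc; exfalso; apply hx; ring
      · exact fin c hc (mk3 _ (Or.inl (by rw [hx', ha])) (Or.inl (by rw [hy', hb])) (Or.inr hz')) hx0
    · by_cases hc : c = 0
      · exact fin b hb (mk3 _ (Or.inl (by rw [hx', ha])) (Or.inr hy') (Or.inl (by rw [hz', hc]))) hx0
      · by_cases hbc : b = c
        · exact fin b hb (mk3 _ (Or.inl (by rw [hx', ha])) (Or.inr hy') (Or.inr (by rw [hz', hbc]))) hx0
        · exfalso; apply hx
          have := key b c hb hc hbc
          subst ha
          linear_combination (b^2+b*c+c^2) * this + (b^3*c+ 2*b^2*c^2 + b*c^3) * h2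
  · by_cases hb : b = 0
    · by_cases hc : c = 0
      · exact fin a ha (mk3 _ (Or.inr hx') (Or.inl (by rw [hy', hb])) (Or.inl (by rw [hz', hc]))) hx0
      · by_cases hac : a = c
        · exact fin a ha (mk3 _ (Or.inr hx') (Or.inl (by rw [hy', hb])) (Or.inr (by rw [hz', hac]))) hx0
        · exfalso; apply hx
          have := key a c ha hc hac
          subst hb
          linear_combination (a^2+a*c+c^2) * this + (a^3*c+ 2*a^2*c^2 + a*c^3) * h2
    · by_cases hc : c = 0
      · by_cases hab : a = b
        · exact fin a ha (mk3 _ (Or.inr hx') (Or.inr (by rw [hy', hab])) (Or.inl (by rw [hz', hc]))) hx0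
        · exfalso; apply hx
          have := key a b ha hb hab
          subst hc
          linear_combination (a^2+a*b+b^2) * this + (a^3*b+ 2*a^2*b^2 + a*b^3) * h2
      · have pair : ∀ a c : F, a ≠ 0 → c ≠ 0 → a ≠ c →
            (a + a + c)^4 + (a * a + a * c + c * a)^2 + a * a * c * (a + a + c) = 0 := by
          intro a c ha hc hac
          have := key a c ha hc hac
          linear_combination (a^2+a*c+c^2) * this +
            (8*a^4 + 18*a^3*c+ 13*a^2*c^2+ 3*a*c^3) * h2
        by_cases hab : a = b
        · by_cases hac : a = c
          · exact fin a ha (mk3 _ (Or.inr hx') (Or.inr (by rw [hy', hab])) (Or.inr (by rw [hz', hac]))) hx0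
          · exfalso; apply hx
            subst hab
            linear_combination pair a c ha hc hac
        · by_cases hac : a = c
          · exfalso; apply hx
            subst hac
            linear_combination pair a b ha hb hab
          · by_cases hbc : b = c
            · exfalso; apply hx
              subst hbc
              linear_combination pair b a hb ha (Ne.symm hab)
            · exfalso; apply hx
              have k1 := key a b ha hb hab
              have k2 := key b c hb hc hbc
              have s : a + b + c = 0 := by
                have : (a - c) * (a + b + c) = 0 := by linear_combination k1 - k2
                exact (mul_eq_zero.1 this).resolve_left (sub_ne_zero.2 hac)
              have e2 : a * b + b * c + c * a = 0 := by
                have : c = - a - b := by linear_combination s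
                rw [this]
                linear_combination -k1
              rw [s, e2]; ring

/-- In the exceptional case the number of points is 14. -/
lemma exceptional_count (h4 : Fintype.card F = 4) (f : MvPolynomial (Fin 3) F)
    (hpe : ProjectivelyEquivalent F f (hommaKimQuartic F)) : (zf f).card = 14 := by
  obtain ⟨M, hM, c, hc, hfe⟩ := hpe
  have h2 := two_zero h4
  have hf : ∀ x : Fin 3 → F, eval x f = c * eval (M.mulVec x) (hommaKimQuartic F) := by
    intro x
    rw [hfe, smul_eval]
    congr 1
    exact eval_lsub M _ x
  have hfh : f.IsHomogeneous 4 := by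
    rw [hfe, smul_eq_C_mul]
    exact (lsub_hom M K_hom).C_mul c
  have hMM : ∀ x : Fin 3 → F, M.mulVec (M⁻¹.mulVec x) = x := by
    intro x; rw [Matrix.mulVec_mulVec, Matrix.mul_nonsing_inv _ hM, Matrix.one_mulVec]
  have hMM2 : ∀ x : Fin 3 → F, M⁻¹.mulVec (M.mulVec x) = x := by
    intro x; rw [Matrix.mulVec_mulVec, Matrix.nonsing_inv_mul _ hM, Matrix.one_mulVec]
  have hne : ∀ b : BI, M⁻¹.mulVec (bv b.1) ≠ 0 := by
    intro b h
    apply bv_ne (F := F) b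
    rw [← hMM (bv b.1), h, Matrix.mulVec_zero]
  set ψ : BI → ℙ F (Fin 3 → F) := fun b => mk F (M⁻¹.mulVec (bv b.1)) (hne b) with hψ
  have hinj : Function.Injective ψ := by
    intro b b' h
    rw [hψ] at h
    simp only [mk_eq_mk_iff'] at h
    obtain ⟨a, ha⟩ := h
    apply bv_smul_inj b b' a
    rw [← hMM (bv b.1), ← ha, Matrix.mulVec_smul, hMM]
  have himg : nzf f = Finset.univ.map ⟨ψ, hinj⟩ := by
    ext X
    rw [mem_nzf, mem_zf, Finset.mem_map]
    constructor
    · intro h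
      rw [hf, mul_eq_zero, not_or] at h
      obtain ⟨b, a, ha, hx⟩ := K_ne h4 _ h.2
      refine ⟨b, Finset.mem_univ _, ?_⟩
      change mk F (M⁻¹.mulVec (bv b.1)) (hne b) = X
      rw [← X.mk_rep, mk_eq_mk_iff']
      refine ⟨a⁻¹, ?_⟩
      rw [← hMM2 X.rep, hx, Matrix.mulVec_smul, smul_smul, inv_mul_cancel₀ ha, one_smul]
    · rintro ⟨b, -, rfl⟩
      change ¬ eval (mk F (M⁻¹.mulVec (bv b.1)) (hne b)).rep f = 0
      rw [eval_mk_rep hfh, hf, hMM, K_bv h2]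
      simpa using hc
  have := card_zf_add f
  rw [himg, Finset.card_map, Finset.card_univ, card_BI, h4] at this
  omega

end Exceptional

section Exceptional2
open Configuration ProjectivePlane Projectivization
open scoped LinearAlgebra.Projectivization
variable {F : Type} [Field F] [Fintype F] [DecidableEq F]

lemma third_pt {S : Finset (ℙ F (Fin 3 → F))}
    (hl : ∀ l : ℙ F (Fin 3 → F), tnum S l = 1 ∨ tnum S l = 3) {X Y : ℙ F (Fin 3 → F)}
    (hX : X ∈ S) (hY : Y ∈ S) (hXY : X ≠ Y) {l : ℙ F (Fin 3 → F)} (hXl : X ∈ l) (hYl : Y ∈ l) :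
    ∃ Z ∈ S, Z ≠ X ∧ Z ≠ Y ∧ Z ∈ l ∧ ∀ W ∈ S, W ∈ l → W = X ∨ W = Y ∨ W = Z := by
  classical
  have h3 : tnum S l = 3 := by
    rcases hl l with h | h
    · exfalso
      rw [tnum_eq, Finset.card_eq_one] at h
      obtain ⟨a, ha⟩ := h
      have h1 : X ∈ ({a} : Finset _) := by rw [← ha]; simp [hX, hXl]
      have h2 : Y ∈ ({a} : Finset _) := by rw [← ha]; simp [hY, hYl]
      simp only [Finset.mem_singleton] at h1 h2
      exact hXY (h1.trans h2.symm)
    · exact h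
  rw [tnum_eq] at h3
  have hXm : X ∈ S.filter (fun X => X ∈ l) := by simp [hX, hXl]
  have hYm : Y ∈ (S.filter (fun X => X ∈ l)).erase X := by simp [hY, hYl, hXY.symm]
  have h1 : (((S.filter (fun X => X ∈ l)).erase X).erase Y).card = 1 := by
    rw [Finset.card_erase_of_mem hYm, Finset.card_erase_of_mem hXm, h3]
  obtain ⟨Z, hZ⟩ := Finset.card_eq_one.1 h1
  have hZm : Z ∈ (((S.filter (fun X => X ∈ l)).erase X).erase Y) := by rw [hZ]; simp
  simp only [Finset.mem_erase, Finset.mem_filter] at hZm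
  refine ⟨Z, hZm.2.2.1, hZm.2.1, hZm.1, hZm.2.2.2, fun W hW hWl => ?_⟩
  by_contra! h
  have : W ∈ (((S.filter (fun X => X ∈ l)).erase X).erase Y) := by
    simp [hW, hWl, h.1, h.2.1]
  rw [hZ, Finset.mem_singleton] at this
  exact h.2.2 this

lemma quad_third {S : Finset (ℙ F (Fin 3 → F))} (hS : S.card = 7)
    (hl : ∀ l : ℙ F (Fin 3 → F), tnum S l = 1 ∨ tnum S l = 3)
    (P : Fin 4 → ℙ F (Fin 3 → F)) (hP : ∀ i, P i ∈ S)
    (hnc : ∀ i j k, i ≠ j → i ≠ k → j ≠ k → ∀ l : ℙ F (Fin 3 → F), P i ∈ l → P j ∈ l → P k ∉ l)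
    (hinj : ∀ i j, i ≠ j → P i ≠ P j)
    (i1 i2 i3 i4 : Fin 4) (h12 : i1 ≠ i2) (h13 : i1 ≠ i3) (h14 : i1 ≠ i4) (h23 : i2 ≠ i3)
    (h24 : i2 ≠ i4) (h34 : i3 ≠ i4) (l m : ℙ F (Fin 3 → F)) (hl1 : P i1 ∈ l) (hl2 : P i2 ∈ l)
    (hm3 : P i3 ∈ m) (hm4 : P i4 ∈ m) : ∃ A ∈ S, A ∈ l ∧ A ∈ m := by
  classical
  have uniq : ∀ {p q : ℙ F (Fin 3 → F)} {l m : ℙ F (Fin 3 → F)}, p ≠ q → p ∈ l → q ∈ l → p ∈ m →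
      q ∈ m → l = m := fun h a b c d => (Nondegenerate.eq_or_eq a b c d).resolve_left h
  obtain ⟨A, hAS, hA1, hA2, hAl, hA⟩ := third_pt hl (hP i1) (hP i2) (hinj _ _ h12) hl1 hl2
  obtain ⟨Q, hQS, hQ3, hQ4, hQm, hQ⟩ := third_pt hl (hP i3) (hP i4) (hinj _ _ h34) hm3 hm4
  obtain ⟨s, hs1, hs3⟩ : ∃ s : ℙ F (Fin 3 → F), P i1 ∈ s ∧ P i3 ∈ s :=
    ⟨_, HasLines.mkLine_ax (hinj _ _ h13)⟩
  obtain ⟨t, ht2, ht3⟩ : ∃ s : ℙ F (Fin 3 → F), P i2 ∈ s ∧ P i3 ∈ s :=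
    ⟨_, HasLines.mkLine_ax (hinj _ _ h23)⟩
  obtain ⟨B, hBS, hB1, hB3, hBs, hB⟩ := third_pt hl (hP i1) (hP i3) (hinj _ _ h13) hs1 hs3
  obtain ⟨C, hCS, hC2, hC3, hCt, hC⟩ := third_pt hl (hP i2) (hP i3) (hinj _ _ h23) ht2 ht3
  have n3l : P i3 ∉ l := hnc _ _ _ h12 h13 h23 _ hl1 hl2
  have n4l : P i4 ∉ l := hnc _ _ _ h12 h14 h24 _ hl1 hl2
  have n2s : P i2 ∉ s := hnc _ _ _ h13 h12 h23.symm _ hs1 hs3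
  have n4s : P i4 ∉ s := hnc _ _ _ h13 h14 h34 _ hs1 hs3
  have n1t : P i1 ∉ t := hnc _ _ _ h23 h12.symm h13.symm _ ht2 ht3
  have n4t : P i4 ∉ t := hnc _ _ _ h23 h24 h34 _ ht2 ht3
  have n1m : P i1 ∉ m := hnc _ _ _ h34 h13.symm h14.symm _ hm3 hm4
  have n2m : P i2 ∉ m := hnc _ _ _ h34 h23.symm h24.symm _ hm3 hm4
  have AB : A ≠ B := by
    rintro rfl; exact n2s (uniq hA1 hAl hl1 hBs hs1 ▸ hl2)
  have AC : A ≠ C := by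
    rintro rfl; exact n1t (uniq hA2 hAl hl2 hCt ht2 ▸ hl1)
  have BC : B ≠ C := by
    rintro rfl; exact n1t (uniq hB3 hBs hs3 hCt ht3 ▸ hs1)
  have A3 : A ≠ P i3 := by rintro rfl; exact n3l hAl
  have A4 : A ≠ P i4 := by rintro rfl; exact n4l hAl
  have B2 : B ≠ P i2 := by rintro rfl; exact n2s hBs
  have B4 : B ≠ P i4 := by rintro rfl; exact n4s hBs
  have C1 : C ≠ P i1 := by rintro rfl; exact n1t hCt
  have C4 : C ≠ P i4 := by rintro rfl; exact n4t hCt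
  have hS' : ({P i1, P i2, P i3, P i4, A, B, C} : Finset (ℙ F (Fin 3 → F))) = S := by
    apply Finset.eq_of_subset_of_card_le
    · intro X
      simp only [Finset.mem_insert, Finset.mem_singleton]
      rintro (rfl | rfl | rfl | rfl | rfl | rfl | rfl) <;> first | assumption | exact hP _
    · rw [hS]
      repeat rw [Finset.card_insert_of_notMem]
      · simp
      all_goals
        simp only [Finset.mem_insert, Finset.mem_singleton, not_or]
        simp [*, Ne.symm, hA1.symm, hA2.symm, A3.symm, A4.symm, hB1.symm, B2.symm, hB3.symm, B4.symm, C1.symm, hC2.symm,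
          hC3.symm, C4.symm]
  refine ⟨A, hAS, hAl, ?_⟩
  have : Q ∈ ({P i1, P i2, P i3, P i4, A, B, C} : Finset (ℙ F (Fin 3 → F))) := by rw [hS']; exact hQS
  simp only [Finset.mem_insert, Finset.mem_singleton] at this
  rcases this with rfl | rfl | rfl | rfl | rfl | rfl | rfl
  · exact absurd hQm n1m
  · exact absurd hQm n2m
  · exact absurd rfl hQ3
  · exact absurd rfl hQ4
  · exact hQm
  · exact absurd (uniq hB3 hBs hs3 hQm hm3 ▸ hm4) n4s
  · exact absurd (uniq hC3 hCt ht3 hQm hm3 ▸ hm4) n4t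

lemma four_aux (p : Fin 4 → Prop) (a : ¬ (p 0 ∧ p 1 ∧ p 2)) (b : ¬ (p 0 ∧ p 1 ∧ p 3))
    (c : ¬ (p 0 ∧ p 2 ∧ p 3)) (d : ¬ (p 1 ∧ p 2 ∧ p 3)) : ∀ i j k : Fin 4, i ≠ j → i ≠ k → j ≠ k →
    p i → p j → ¬ p k := by
  intro i j k hij hik hjk hi hj hk
  have key : ∀ i j k : Fin 4, i ≠ j → i ≠ k → j ≠ k →
      ((∀ x, x = 0 ∨ x = 1 ∨ x = 2 → x = i ∨ x = j ∨ x = k) ∨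
      (∀ x, x = 0 ∨ x = 1 ∨ x = 3 → x = i ∨ x = j ∨ x = k) ∨
      (∀ x, x = 0 ∨ x = 2 ∨ x = 3 → x = i ∨ x = j ∨ x = k) ∨
      (∀ x, x = 1 ∨ x = 2 ∨ x = 3 → x = i ∨ x = j ∨ x = k)) := by decide
  have all : ∀ x, x = i ∨ x = j ∨ x = k → p x := by
    rintro x (rfl | rfl | rfl) <;> assumption
  rcases key i j k hij hik hjk with h | h | h | h
  · exact a ⟨all _ (h _ (by simp)), all _ (h _ (by simp)), all _ (h _ (by simp))⟩
  · exact b ⟨all _ (h _ (by simp)), all _ (h _ (by simp)), all _ (h _ (by simp))⟩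
  · exact c ⟨all _ (h _ (by simp)), all _ (h _ (by simp)), all _ (h _ (by simp))⟩
  · exact d ⟨all _ (h _ (by simp)), all _ (h _ (by simp)), all _ (h _ (by simp))⟩

lemma four_inj {α : Type} {a b c d : α} (hab : a ≠ b) (hac : a ≠ c) (had : a ≠ d) (hbc : b ≠ c)
    (hbd : b ≠ d) (hcd : c ≠ d) : ∀ i j : Fin 4, i ≠ j →
    (![a, b, c, d] : Fin 4 → α) i ≠ (![a, b, c, d] : Fin 4 → α) j := by
  intro i j hij
  fin_cases i <;> fin_cases j <;>
    first | exact absurd rfl hij | assumption | (apply Ne.symm; assumption)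

lemma exists_quad {S : Finset (ℙ F (Fin 3 → F))} (hS : S.card = 7)
    (hl : ∀ l : ℙ F (Fin 3 → F), tnum S l = 1 ∨ tnum S l = 3) :
    ∃ P : Fin 4 → ℙ F (Fin 3 → F), (∀ i, P i ∈ S) ∧
    (∀ i j k, i ≠ j → i ≠ k → j ≠ k → ∀ l : ℙ F (Fin 3 → F), P i ∈ l → P j ∈ l → P k ∉ l) ∧
    (∀ i j, i ≠ j → P i ≠ P j) := by
  classical
  have uniq : ∀ {p q : ℙ F (Fin 3 → F)} {l m : ℙ F (Fin 3 → F)}, p ≠ q → p ∈ l → q ∈ l → p ∈ m →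
      q ∈ m → l = m := fun h a b c d => (Nondegenerate.eq_or_eq a b c d).resolve_left h
  obtain ⟨P1, h1, P2, h2, h12⟩ := Finset.one_lt_card.1 (by omega : 1 < S.card)
  obtain ⟨l, hl1, hl2⟩ : ∃ s : ℙ F (Fin 3 → F), P1 ∈ s ∧ P2 ∈ s := ⟨_, HasLines.mkLine_ax h12⟩
  obtain ⟨A, hAS, hA1, hA2, hAl, hA⟩ := third_pt hl h1 h2 h12 hl1 hl2
  obtain ⟨P3, h3, hP3⟩ := Finset.exists_mem_notMem_of_card_lt_card
    (s := {P1, P2, A}) (t := S) (lt_of_le_of_lt Finset.card_le_three (by omega))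
  simp only [Finset.mem_insert, Finset.mem_singleton, not_or] at hP3
  obtain ⟨s, hs1, hs3⟩ : ∃ s : ℙ F (Fin 3 → F), P1 ∈ s ∧ P3 ∈ s := ⟨_, HasLines.mkLine_ax (Ne.symm hP3.1)⟩
  obtain ⟨t, ht2, ht3⟩ : ∃ s : ℙ F (Fin 3 → F), P2 ∈ s ∧ P3 ∈ s := ⟨_, HasLines.mkLine_ax (Ne.symm hP3.2.1)⟩
  obtain ⟨B, hBS, hB1, hB3, hBs, hB⟩ := third_pt hl h1 h3 (Ne.symm hP3.1) hs1 hs3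
  obtain ⟨C, hCS, hC2, hC3, hCt, hC⟩ := third_pt hl h2 h3 (Ne.symm hP3.2.1) ht2 ht3
  obtain ⟨P4, h4, hP4⟩ := Finset.exists_mem_notMem_of_card_lt_card
    (s := {P1, P2, A, P3, B, C}) (t := S) (lt_of_le_of_lt Finset.card_le_six (by omega))
  simp only [Finset.mem_insert, Finset.mem_singleton, not_or] at hP4
  have n3 : P3 ∉ l := by intro h; have := hA _ h3 h; tauto
  have n4l : P4 ∉ l := by intro h; have := hA _ h4 h; tauto
  have n4s : P4 ∉ s := by intro h; have := hB _ h4 h; tauto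
  have n4t : P4 ∉ t := by intro h; have := hC _ h4 h; tauto
  -- three collinearity facts
  have c123 : ∀ m : ℙ F (Fin 3 → F), ¬ (P1 ∈ m ∧ P2 ∈ m ∧ P3 ∈ m) := by
    rintro m ⟨a, b, c⟩; exact n3 (uniq h12 a b hl1 hl2 ▸ c)
  have c124 : ∀ m : ℙ F (Fin 3 → F), ¬ (P1 ∈ m ∧ P2 ∈ m ∧ P4 ∈ m) := by
    rintro m ⟨a, b, c⟩; exact n4l (uniq h12 a b hl1 hl2 ▸ c)
  have c134 : ∀ m : ℙ F (Fin 3 → F), ¬ (P1 ∈ m ∧ P3 ∈ m ∧ P4 ∈ m) := by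
    rintro m ⟨a, b, c⟩; exact n4s (uniq (Ne.symm hP3.1) a b hs1 hs3 ▸ c)
  have c234 : ∀ m : ℙ F (Fin 3 → F), ¬ (P2 ∈ m ∧ P3 ∈ m ∧ P4 ∈ m) := by
    rintro m ⟨a, b, c⟩; exact n4t (uniq (Ne.symm hP3.2.1) a b ht2 ht3 ▸ c)
  refine ⟨![P1, P2, P3, P4], ?_, ?_, ?_⟩
  · intro i; fin_cases i <;> assumption
  · intro i j k hij hik hjk m hi hj hk
    exact four_aux (fun i => (![P1, P2, P3, P4] : Fin 4 → ℙ F (Fin 3 → F)) i ∈ m) (c123 m) (c124 m)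
      (c134 m) (c234 m) i j k hij hik hjk hi hj hk
  · exact four_inj h12 (Ne.symm hP3.1) (Ne.symm hP4.1) (Ne.symm hP3.2.1) (Ne.symm hP4.2.1)
      (Ne.symm hP4.2.2.2.1)

end Exceptional2

section Exceptional3
open Configuration ProjectivePlane Projectivization
open scoped LinearAlgebra.Projectivization
variable {F : Type} [Field F] [Fintype F] [DecidableEq F]

lemma mk_eq_of_inter {l m A : ℙ F (Fin 3 → F)} (hlm : l ≠ m) (hAl : A ∈ l) (hAm : A ∈ m)
    (u : Fin 3 → F) (hu : u ≠ 0) (h1 : dotProduct u l.rep = 0) (h2 : dotProduct u m.rep = 0) :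
    mk F u hu = A := by
  have a : mk F u hu ∈ l := (mk_mem_iff_dot u hu l).2 h1
  have b : mk F u hu ∈ m := (mk_mem_iff_dot u hu m).2 h2
  exact (Nondegenerate.eq_or_eq a hAl b hAm).resolve_right hlm

/-- a frame adapted to the seven points -/
lemma exists_frame {f : MvPolynomial (Fin 3) F} (hf : f.IsHomogeneous 4) (h7 : (nzf f).card = 7)
    (hl : ∀ l : ℙ F (Fin 3 → F), tnum (nzf f) l = 1 ∨ tnum (nzf f) l = 3) :
    ∃ M : Matrix (Fin 3) (Fin 3) F, M.det ≠ 0 ∧ ∀ b : BI, eval (M.mulVec (bv b.1)) f ≠ 0 := by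
  classical
  obtain ⟨P, hP, hnc, hinj⟩ := exists_quad h7 hl
  set M : Matrix (Fin 3) (Fin 3) F := Matrix.of fun i j => (P (j.castSucc)).rep i with hM
  have hMv : ∀ w : Fin 3 → F, M.mulVec w = w 0 • (P 0).rep + w 1 • (P 1).rep + w 2 • (P 2).rep := by
    intro w
    funext i
    simp [hM, Matrix.mulVec, dotProduct, Fin.sum_univ_three, mul_comm]
  have hdet : M.det ≠ 0 := by
    intro h
    obtain ⟨l, hl0, hl⟩ := Matrix.exists_vecMul_eq_zero_iff.2 h
    have : ∀ j : Fin 3, P j.castSucc ∈ mk F l hl0 := by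
      intro j
      rw [mem_mk_iff_dot, dotProduct_comm]
      exact congrFun hl j
    exact hnc 0 1 2 (by decide) (by decide) (by decide) _ (this 0) (this 1) (this 2)
  set w := M⁻¹.mulVec (P 3).rep with hw
  have hw3 : (P 3).rep = w 0 • (P 0).rep + w 1 • (P 1).rep + w 2 • (P 2).rep := by
    rw [← hMv, hw, Matrix.mulVec_mulVec, Matrix.mul_nonsing_inv _ (isUnit_iff_ne_zero.2 hdet),
      Matrix.one_mulVec]
  have join : ∀ i j : Fin 4, i ≠ j → ∃ l : ℙ F (Fin 3 → F), P i ∈ l ∧ P j ∈ l :=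
    fun i j h => ⟨_, HasLines.mkLine_ax (hinj i j h)⟩
  obtain ⟨l01, a01, b01⟩ := join 0 1 (by decide)
  obtain ⟨l02, a02, b02⟩ := join 0 2 (by decide)
  obtain ⟨l12, a12, b12⟩ := join 1 2 (by decide)
  obtain ⟨l03, a03, b03⟩ := join 0 3 (by decide)
  obtain ⟨l13, a13, b13⟩ := join 1 3 (by decide)
  obtain ⟨l23, a23, b23⟩ := join 2 3 (by decide)
  have n01 := hnc 0 1 3 (by decide) (by decide) (by decide) l01 a01 b01
  have n02 := hnc 0 2 3 (by decide) (by decide) (by decide) l02 a02 b02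
  have n12 := hnc 1 2 3 (by decide) (by decide) (by decide) l12 a12 b12
  have e01 : l01 ≠ l23 := by rintro rfl; exact n01 b23
  have e02 : l02 ≠ l13 := by rintro rfl; exact n02 b13
  have e12 : l12 ≠ l03 := by rintro rfl; exact n12 b03
  obtain ⟨A, hAS, hA1, hA2⟩ := quad_third h7 hl P hP hnc hinj 0 1 2 3 (by decide) (by decide)
    (by decide) (by decide) (by decide) (by decide) l01 l23 a01 b01 a23 b23
  obtain ⟨B, hBS, hB1, hB2⟩ := quad_third h7 hl P hP hnc hinj 0 2 1 3 (by decide) (by decide)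
    (by decide) (by decide) (by decide) (by decide) l02 l13 a02 b02 a13 b13
  obtain ⟨C, hCS, hC1, hC2⟩ := quad_third h7 hl P hP hnc hinj 1 2 0 3 (by decide) (by decide)
    (by decide) (by decide) (by decide) (by decide) l12 l03 a12 b12 a03 b03
  rw [mem_iff_dot] at a01 b01 a02 b02 a12 b12 a03 b03 a13 b13 a23 b23 n01 n02 n12
  have w2 : w 2 ≠ 0 := by
    intro h
    apply n01; rw [hw3, h]; simp [add_dotProduct, a01, b01]
  have w1 : w 1 ≠ 0 := by
    intro h
    apply n02; rw [hw3, h]; simp [add_dotProduct, a02, b02]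
  have w0 : w 0 ≠ 0 := by
    intro h
    apply n12; rw [hw3, h]; simp [add_dotProduct, a12, b12]
  have hS : ∀ X ∈ nzf f, eval X.rep f ≠ 0 := by
    intro X hX; rwa [mem_nzf, mem_zf] at hX
  have hMinj : ∀ v : Fin 3 → F, M.mulVec v = 0 → v = 0 := by
    intro v hv
    by_contra h
    exact hdet (Matrix.exists_mulVec_eq_zero_iff.1 ⟨v, h, hv⟩)
  have inter : ∀ {l m A : ℙ F (Fin 3 → F)}, l ≠ m → A ∈ nzf f → A ∈ l → A ∈ m →
    ∀ v : Fin 3 → F, v ≠ 0 → dotProduct (M.mulVec v) l.rep = 0 → dotProduct (M.mulVec v) m.rep = 0 →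
    eval (M.mulVec v) f ≠ 0 := by
    intro l m A hlm hA hl hm v hv h1 h2
    have hu : M.mulVec v ≠ 0 := fun h => hv (hMinj v h)
    have := mk_eq_of_inter hlm hl hm _ hu h1 h2
    have h3 := hS A hA
    rw [← this] at h3
    rwa [Ne, eval_mk_rep hf] at h3
  have single : ∀ (i : Fin 4) (a : F), a ≠ 0 → eval (a • (P i).rep) f ≠ 0 := by
    intro i a ha
    rw [eval_smul_hom hf]
    exact mul_ne_zero (pow_ne_zero _ ha) (hS _ (hP i))
  refine ⟨M * Matrix.diagonal w, ?_, ?_⟩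
  · rw [Matrix.det_mul, Matrix.det_diagonal, Fin.prod_univ_three]
    exact mul_ne_zero hdet (mul_ne_zero (mul_ne_zero w0 w1) w2)
  · rintro ⟨b, hb⟩
    rw [← Matrix.mulVec_mulVec]
    have hb' : ¬ (b 0 = false ∧ b 1 = false ∧ b 2 = false) := by
      rintro ⟨h0, h1, h2⟩
      apply hb
      funext i
      fin_cases i <;> assumption
    have e : (Matrix.diagonal w).mulVec (bv b) = fun i => w i * if b i then 1 else 0 := by
      funext i; rw [Matrix.mulVec_diagonal]; rfl
    have v01 : eval (M.mulVec ![w 0, w 1, 0]) f ≠ 0 := by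
      apply inter e01 hAS hA1 hA2
      · intro h; exact w0 (congrFun h 0)
      · rw [hMv]; simp [add_dotProduct, a01, b01]
      · have : M.mulVec ![w 0, w 1, 0] = (P 3).rep - w 2 • (P 2).rep := by
          rw [hMv, hw3]; simp
        rw [this]; simp [sub_dotProduct, a23, b23]
    have v02 : eval (M.mulVec ![w 0, 0, w 2]) f ≠ 0 := by
      apply inter e02 hBS hB1 hB2
      · intro h; exact w0 (congrFun h 0)
      · rw [hMv]; simp [add_dotProduct, a02, b02]
      · have : M.mulVec ![w 0, 0, w 2] = (P 3).rep - w 1 • (P 1).rep := by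
          rw [hMv, hw3]; simp; abel
        rw [this]; simp [sub_dotProduct, a13, b13]
    have v12 : eval (M.mulVec ![0, w 1, w 2]) f ≠ 0 := by
      apply inter e12 hCS hC1 hC2
      · intro h; exact w1 (congrFun h 1)
      · rw [hMv]; simp [add_dotProduct, a12, b12]
      · have : M.mulVec ![0, w 1, w 2] = (P 3).rep - w 0 • (P 0).rep := by
          rw [hMv, hw3]; simp; abel
        rw [this]; simp [sub_dotProduct, a03, b03]
    rw [hMv] at v01 v02 v12
    simp only [Matrix.cons_val_zero, Matrix.cons_val_one, Matrix.cons_val, zero_smul, add_zero, zero_add] at v01 v02 v12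
    have v012 : eval (w 0 • (P 0).rep + w 1 • (P 1).rep + w 2 • (P 2).rep) f ≠ 0 := by
      rw [← hw3]; exact hS _ (hP 3)
    rw [e, hMv]
    clear e hw3 hMv hb inter
    rcases Bool.eq_false_or_eq_true (b 0) with h0 | h0 <;>
    rcases Bool.eq_false_or_eq_true (b 1) with h1 | h1 <;>
    rcases Bool.eq_false_or_eq_true (b 2) with h3 | h3 <;> 
    simp only [h0, h1, h3, if_true, Bool.false_eq_true, if_false, mul_one, mul_zero, zero_smul, add_zero, zero_add] <;>
    with_reducible first | exact v012 | exact v01 | exact v02 | exact v12 | exact single 0 _ w0 |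
      exact single 1 _ w1 | exact single 2 _ w2 | exact absurd ⟨h0, h1, h3⟩ hb'

lemma sum_BI (G : BI → F) : ∑ b, G b = G ⟨![true, false, false], by decide⟩ +
    G ⟨![false, true, false], by decide⟩ + G ⟨![false, false, true], by decide⟩ +
    G ⟨![true, true, false], by decide⟩ + G ⟨![true, false, true], by decide⟩ +
    G ⟨![false, true, true], by decide⟩ + G ⟨![true, true, true], by decide⟩ := by
  have : (Finset.univ : Finset BI) = {⟨![true, false, false], by decide⟩,
    ⟨![false, true, false], by decide⟩, ⟨![false, false, true], by decide⟩,
    ⟨![true, true, false], by decide⟩, ⟨![true, false, true], by decide⟩,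
    ⟨![false, true, true], by decide⟩, ⟨![true, true, true], by decide⟩} := by decide
  rw [this]
  repeat rw [Finset.sum_insert (by decide)]
  rw [Finset.sum_singleton]
  ring

lemma BI_cases (p : BI → Prop) (h1 : p ⟨![true, false, false], by decide⟩)
    (h2 : p ⟨![false, true, false], by decide⟩) (h3 : p ⟨![false, false, true], by decide⟩)
    (h4 : p ⟨![true, true, false], by decide⟩) (h5 : p ⟨![true, false, true], by decide⟩)
    (h6 : p ⟨![false, true, true], by decide⟩) (h7 : p ⟨![true, true, true], by decide⟩) :
    ∀ b, p b := by
  intro b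
  have : ∀ b : BI, b = ⟨![true, false, false], by decide⟩ ∨
    b = ⟨![false, true, false], by decide⟩ ∨ b = ⟨![false, false, true], by decide⟩ ∨
    b = ⟨![true, true, false], by decide⟩ ∨ b = ⟨![true, false, true], by decide⟩ ∨
    b = ⟨![false, true, true], by decide⟩ ∨ b = ⟨![true, true, true], by decide⟩ := by decide
  rcases this b with rfl | rfl | rfl | rfl | rfl | rfl | rfl <;> assumption

lemma exceptional_struct (h4 : Fintype.card F = 4) {f : MvPolynomial (Fin 3) F}
    (hf : f.IsHomogeneous 4) (h7 : (nzf f).card = 7)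
    (hl : ∀ l : ℙ F (Fin 3 → F), tnum (nzf f) l = 1 ∨ tnum (nzf f) l = 3) :
    ProjectivelyEquivalent F f (hommaKimQuartic F) := by
  classical
  obtain ⟨M, hM, hMb⟩ := exists_frame hf h7 hl
  have h2 := two_zero h4
  have hMu := isUnit_iff_ne_zero.2 hM
  have hMM : ∀ x : Fin 3 → F, M.mulVec (M⁻¹.mulVec x) = x := by
    intro x; rw [Matrix.mulVec_mulVec, Matrix.mul_nonsing_inv _ hMu, Matrix.one_mulVec]
  have hMM2 : ∀ x : Fin 3 → F, M⁻¹.mulVec (M.mulVec x) = x := by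
    intro x; rw [Matrix.mulVec_mulVec, Matrix.nonsing_inv_mul _ hMu, Matrix.one_mulVec]
  have hne : ∀ b : BI, M.mulVec (bv b.1) ≠ 0 := by
    intro b h
    apply bv_ne (F := F) b
    rw [← hMM2 (bv b.1), h, Matrix.mulVec_zero]
  set ψ : BI → ℙ F (Fin 3 → F) := fun b => mk F (M.mulVec (bv b.1)) (hne b) with hψ
  have hinj : Function.Injective ψ := by
    intro b b' h
    rw [hψ] at h
    simp only [mk_eq_mk_iff'] at h
    obtain ⟨a, ha⟩ := h
    apply bv_smul_inj b b' a
    rw [← hMM2 (bv b.1), ← ha, Matrix.mulVec_smul, hMM2]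
  have himg : Finset.univ.map ⟨ψ, hinj⟩ = nzf f := by
    apply Finset.eq_of_subset_of_card_le
    · intro X hX
      rw [Finset.mem_map] at hX
      obtain ⟨b, -, rfl⟩ := hX
      rw [mem_nzf, mem_zf]
      change ¬ eval (mk F (M.mulVec (bv b.1)) (hne b)).rep f = 0
      rw [eval_mk_rep hf]
      exact hMb b
    · rw [h7, Finset.card_map, Finset.card_univ, card_BI]
  set V : BI → F := fun b => eval (M.mulVec (bv b.1)) f with hV
  have key : ∀ i j : Fin 3, ∑ b : BI, V b * ((bv b.1 : Fin 3 → F) i * (bv b.1 : Fin 3 → F) j) = 0 := by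
    intro i j
    have hg : (f * lsub M⁻¹ (X i * X j)).IsHomogeneous 6 :=
      hf.mul (lsub_hom M⁻¹ ((isHomogeneous_X F i).mul (isHomogeneous_X F j)))
    have hs := sum_proj hg (by rw [h4]; decide) (by decide) (by rw [h4]; decide)
    rw [← Finset.sum_subset (Finset.subset_univ (nzf f)), ← himg, Finset.sum_map] at hs
    · rw [← hs]
      refine Finset.sum_congr rfl fun b _ => ?_
      change _ = eval (mk F (M.mulVec (bv b.1)) (hne b)).rep _
      rw [eval_mk_rep_eq hg (by rw [h4]; decide), map_mul, eval_lsub, hMM2]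
      simp [hV]
    · intro X _ hX
      rw [mem_nzf, not_not, mem_zf] at hX
      rw [map_mul, hX, zero_mul]
  simp only [sum_BI] at key
  have k01 := key 0 1
  have k02 := key 0 2
  have k12 := key 1 2
  have k00 := key 0 0
  have k11 := key 1 1
  have k22 := key 2 2
  simp [bv] at k01 k02 k12 k00 k11 k22
  set c := V ⟨![true, true, true], by decide⟩ with hc
  have hc0 : c ≠ 0 := hMb _
  have hconst : ∀ b, V b = c := by
    apply BI_cases
    · linear_combination k00 - k01 - k02
    · linear_combination k11 - k01 - k12
    · linear_combination k22 - k02 - k12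
    · linear_combination k01 - c * h2
    · linear_combination k02 - c * h2
    · linear_combination k12 - c * h2
    · rfl
  have hfun : lsub M f = c • hommaKimQuartic F := by
    refine (lsub_hom M hf).funext_of_le_card (n := 4) ?_ ?_ ?_
    · rw [smul_eq_C_mul]; exact K_hom.C_mul c
    · intro r
      rw [eval_lsub, smul_eval]
      by_cases hr : eval r (hommaKimQuartic F) = 0
      · rw [hr, mul_zero]
        by_contra hne0
        have hr0 : M.mulVec r ≠ 0 := by
          intro h
          rw [h] at hne0
          apply hne0
          have := eval_smul_hom hf 0 0
          simpa using this
        have hmem : mk F (M.mulVec r) hr0 ∈ nzf f := by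
          rw [mem_nzf, mem_zf, eval_mk_rep hf]; exact hne0
        rw [← himg, Finset.mem_map] at hmem
        obtain ⟨b, -, hb⟩ := hmem
        change mk F (M.mulVec (bv b.1)) (hne b) = _ at hb
        rw [mk_eq_mk_iff'] at hb
        obtain ⟨a, ha⟩ := hb
        have hb2 : bv b.1 = a • r := by
          rw [← hMM2 (bv b.1), ← ha, Matrix.mulVec_smul, hMM2]
        have := K_bv h2 b
        rw [hb2, eval_smul_hom K_hom, hr, mul_zero] at this
        exact zero_ne_one this
      · obtain ⟨b, a, ha, rfl⟩ := K_ne h4 r hr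
        rw [Matrix.mulVec_smul, eval_smul_hom hf, eval_smul_hom K_hom, K_bv h2]
        have := hconst b
        simp only [hV] at this
        rw [this]; ring
    · rw [Cardinal.mk_fintype, h4]
  refine ⟨M⁻¹, ?_, c, hc0, ?_⟩
  · rw [Matrix.isUnit_nonsing_inv_det_iff]; exact hMu
  · have := congrArg (lsub M⁻¹) hfun
    rw [lsub_inv M hM] at this
    rw [this]
    simp [lsub]

end Exceptional3

section HomFactor
variable {F : Type} [Field F]

/-- the grading polynomial -/
def gpoly : MvPolynomial (Fin 3) F →ₐ[F] Polynomial (MvPolynomial (Fin 3) F) :=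
  aeval (fun i => Polynomial.C (X i) * Polynomial.X)

lemma gpoly_monomial (s : Fin 3 →₀ ℕ) (r : F) :
    gpoly (monomial s r) = Polynomial.C (monomial s r) * Polynomial.X ^ s.degree := by
  rw [gpoly, aeval_monomial]
  simp only [mul_pow]
  rw [Finsupp.prod_mul, ← mul_assoc]
  congr 1
  · rw [monomial_eq, map_mul, Polynomial.algebraMap_apply, algebraMap_eq]
    congr 1
    simp only [Finsupp.prod, map_prod, map_pow]
  · simp only [Finsupp.prod, Finset.prod_pow_eq_pow_sum]
    rfl

lemma gpoly_coeff (a : MvPolynomial (Fin 3) F) (k : ℕ) :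
    (gpoly a).coeff k = homogeneousComponent k a := by
  induction a using MvPolynomial.induction_on' with
  | monomial s r =>
    rw [gpoly_monomial, Polynomial.coeff_C_mul_X_pow]
    have : (monomial s r).IsHomogeneous s.degree := isHomogeneous_monomial r rfl
    rw [homogeneousComponent_of_mem this]
  | add p q hp hq => rw [map_add, Polynomial.coeff_add, hp, hq, map_add]

lemma gpoly_hom {a : MvPolynomial (Fin 3) F} {d : ℕ} (ha : a.IsHomogeneous d) :
    gpoly a = Polynomial.C a * Polynomial.X ^ d := by
  ext1 k
  rw [gpoly_coeff, Polynomial.coeff_C_mul_X_pow, homogeneousComponent_of_mem ha]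

lemma hom_of_gpoly {a : MvPolynomial (Fin 3) F}
    (h : (gpoly a).natTrailingDegree = (gpoly a).natDegree) :
    a.IsHomogeneous (gpoly a).natDegree := by
  have h1 : ∀ k, k ≠ (gpoly a).natDegree → homogeneousComponent k a = 0 := by
    intro k hk
    rw [← gpoly_coeff]
    rcases lt_or_gt_of_ne hk with h2 | h2
    · exact Polynomial.coeff_eq_zero_of_lt_natTrailingDegree (h ▸ h2)
    · exact Polynomial.coeff_eq_zero_of_natDegree_lt h2
  have h2 : a = homogeneousComponent (gpoly a).natDegree a := by
    conv_lhs => rw [← sum_homogeneousComponent a]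
    by_cases hm : (gpoly a).natDegree ∈ Finset.range (a.totalDegree + 1)
    · rw [Finset.sum_eq_single_of_mem _ hm]
      intro b _ hb; exact h1 b hb
    · rw [Finset.sum_eq_zero, homogeneousComponent_eq_zero]
      · simpa using hm
      · intro b hb
        apply h1; rintro rfl; exact hm hb
  rw [h2] 
  convert homogeneousComponent_isHomogeneous (gpoly a).natDegree a using 1
  rw [← h2]

lemma hom_factor {a b : MvPolynomial (Fin 3) F} {d : ℕ} (hab : (a * b).IsHomogeneous d)
    (h0 : a * b ≠ 0) : ∃ m n, a.IsHomogeneous m ∧ b.IsHomogeneous n ∧ m + n = d := by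
  have hg := gpoly_hom hab
  have hginj : ∀ c : MvPolynomial (Fin 3) F, c ≠ 0 → gpoly c ≠ 0 := by
    intro c hc h
    apply hc
    rw [← sum_homogeneousComponent c]
    apply Finset.sum_eq_zero
    intro k _
    rw [← gpoly_coeff, h, Polynomial.coeff_zero]
  have ha := hginj a (left_ne_zero_of_mul h0)
  have hb := hginj b (right_ne_zero_of_mul h0)
  rw [map_mul] at hg
  have e1 : (gpoly a * gpoly b).natDegree = d := by
    rw [hg, Polynomial.natDegree_C_mul_X_pow _ _ h0]
  have e2 : (gpoly a * gpoly b).natTrailingDegree = d := by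
    rw [hg, Polynomial.C_mul_X_pow_eq_monomial, Polynomial.natTrailingDegree_monomial h0]
  rw [Polynomial.natDegree_mul ha hb] at e1
  rw [Polynomial.natTrailingDegree_mul ha hb] at e2
  have i1 := Polynomial.natTrailingDegree_le_natDegree (gpoly a)
  have i2 := Polynomial.natTrailingDegree_le_natDegree (gpoly b)
  exact ⟨_, _, hom_of_gpoly (by omega), hom_of_gpoly (by omega), e1⟩

instance homFinite (m : ℕ) : Module.Finite F (homogeneousSubmodule (Fin 3) F m) :=
  Module.Finite.iff_fg.2 (homogeneousSubmodule_fg (Fin 3) F m)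

lemma finrank_hom (m : ℕ) :
    Module.finrank F (homogeneousSubmodule (Fin 3) F m) = (m + 2).choose 2 := by
  classical
  rw [homogeneousSubmodule_eq_finsupp_supported]
  rw [LinearEquiv.finrank_eq (AddMonoidAlgebra.supportedEquivFinsupp (R := F) (S := F) {d : Fin 3 →₀ ℕ | d.degree = m})]
  have hs : {d : Fin 3 →₀ ℕ | d.degree = m} =
      ((Finset.univ : Finset (Fin 3)).finsuppAntidiag m : Set (Fin 3 →₀ ℕ)) := by
    ext d
    simp [Finsupp.degree_eq_sum]
  rw [hs]
  rw [Module.finrank_finsupp_self]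
  have hc : Fintype.card ((Finset.univ : Finset (Fin 3)).finsuppAntidiag m : Set (Fin 3 →₀ ℕ)) =
      ((Finset.univ : Finset (Fin 3)).finsuppAntidiag m).card := by
    rw [← Fintype.card_coe]; exact Fintype.card_congr (Equiv.refl _)
  rw [hc, Finset.card_finsuppAntidiag_nat_eq_choose]
  simp only [Finset.card_univ, Fintype.card_fin]
  rw [show 3 + m - 1 = m + 2 by omega, ← Nat.choose_symm_add]

end HomFactor

section Bezout
variable {F : Type} [Field F]

/-- linear form with given coefficients -/
def linf (l : Fin 3 → F) : MvPolynomial (Fin 3) F := ∑ i, C (l i) * X i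

lemma linf_hom (l : Fin 3 → F) : (linf l).IsHomogeneous 1 :=
  IsHomogeneous.sum _ _ _ fun _ _ => isHomogeneous_C_mul_X _ _

lemma linf_eval (l p : Fin 3 → F) : eval p (linf l) = dotProduct l p := by
  simp [linf, dotProduct]

lemma lineP_linf (l p v : Fin 3 → F) : lineP (linf l) p v =
    Polynomial.C (dotProduct l p) + Polynomial.C (dotProduct l v) * Polynomial.X := by
  simp only [lineP, linf, map_sum, map_mul, aeval_C, aeval_X, Polynomial.algebraMap_eq, dotProduct,
    Finset.sum_mul, ← Finset.sum_add_distrib]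
  refine Finset.sum_congr rfl fun i _ => ?_
  ring

lemma exists_dual {p v : Fin 3 → F} (h : crossProduct p v ≠ 0) : ∃ μ l : Fin 3 → F,
    dotProduct μ p = 1 ∧ dotProduct μ v = 0 ∧ dotProduct l p = 0 ∧ dotProduct l v = 1 := by
  obtain ⟨n, hn⟩ := exists_third h
  set M : Matrix (Fin 3) (Fin 3) F := Matrix.of fun i => ![p i, v i, n i] with hM
  have h1 := Matrix.nonsing_inv_mul M (isUnit_iff_ne_zero.2 hn)
  have key : ∀ i j, dotProduct (M⁻¹ i) (fun k => M k j) = (1 : Matrix (Fin 3) (Fin 3) F) i j := by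
    intro i j; rw [← h1]; rfl
  refine ⟨M⁻¹ 0, M⁻¹ 1, ?_, ?_, ?_, ?_⟩
  · exact (key 0 0).trans (by simp)
  · exact (key 0 1).trans (by simp)
  · exact (key 1 0).trans (by simp)
  · exact (key 1 1).trans (by simp)

lemma lineP_mul (f g : MvPolynomial (Fin 3) F) (p v : Fin 3 → F) :
    lineP (f * g) p v = lineP f p v * lineP g p v := by simp [lineP]

lemma lineP_pow (f : MvPolynomial (Fin 3) F) (n : ℕ) (p v : Fin 3 → F) :
    lineP (f ^ n) p v = lineP f p v ^ n := by simp [lineP]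

lemma lineP_sum {ι : Type} (s : Finset ι) (f : ι → MvPolynomial (Fin 3) F) (p v : Fin 3 → F) :
    lineP (∑ i ∈ s, f i) p v = ∑ i ∈ s, lineP (f i) p v := by simp [lineP]

lemma lineP_prod {ι : Type} (s : Finset ι) (f : ι → MvPolynomial (Fin 3) F) (p v : Fin 3 → F) :
    lineP (∏ i ∈ s, f i) p v = ∏ i ∈ s, lineP (f i) p v := by simp [lineP]

lemma lineP_C (c : F) (p v : Fin 3 → F) : lineP (C c) p v = Polynomial.C c := by simp [lineP]

lemma jet_surj {ι : Type} [Fintype ι] (p v : ι → Fin 3 → F)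
    (hpv : ∀ i, crossProduct (p i) (v i) ≠ 0)
    (hpp : ∀ i j, i ≠ j → crossProduct (p i) (p j) ≠ 0) {k m : ℕ} (hk : 0 < k)
    (hm : k * Fintype.card ι + k ≤ m) (i : ι) (w : Polynomial F) :
    ∃ g : MvPolynomial (Fin 3) F, g.IsHomogeneous m ∧
      Polynomial.X ^ k ∣ lineP g (p i) (v i) - w ∧
      ∀ j, j ≠ i → Polynomial.X ^ k ∣ lineP g (p j) (v j) := by
  classical
  have hμ : ∀ j, ∃ μ : Fin 3 → F, j ≠ i → dotProduct μ (p i) = 1 ∧ dotProduct μ (p j) = 0 := by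
    intro j
    by_cases h : j = i
    · exact ⟨0, fun h' => absurd h h'⟩
    · obtain ⟨μ, -, h1, h2, -⟩ := exists_dual (hpp i j (Ne.symm h))
      exact ⟨μ, fun _ => ⟨h1, h2⟩⟩
  choose μ hμ using hμ
  set G : MvPolynomial (Fin 3) F := ∏ j ∈ Finset.univ.erase i, linf (μ j) ^ k with hG
  have hGh : G.IsHomogeneous (∑ j ∈ Finset.univ.erase i, 1 * k) :=
    IsHomogeneous.prod _ _ _ fun j _ => (linf_hom (μ j)).pow k
  simp only [one_mul, Finset.sum_const, smul_eq_mul] at hGh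
  set e := (Finset.univ.erase i).card * k with he
  have hek : e + k ≤ m := by
    have : (Finset.univ.erase i).card ≤ Fintype.card ι := Finset.card_le_univ _
    have := Nat.mul_le_mul_right k this
    rw [mul_comm k] at hm
    omega
  obtain ⟨a, l, ha1, ha2, hl1, hl2⟩ := exists_dual (hpv i)
  set u := lineP G (p i) (v i) with hu
  have hu0 : u.coeff 0 = 1 := by
    rw [hu, lineP_coeff_zero, hG, map_prod]
    apply Finset.prod_eq_one
    intro j hj
    rw [map_pow, linf_eval, (hμ j (Finset.ne_of_mem_erase hj)).1, one_pow]
  have hcop : IsCoprime u (Polynomial.X ^ k) := by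
    apply IsCoprime.pow_right
    have : Polynomial.X ∣ u - 1 := by
      rw [Polynomial.X_dvd_iff]; simp [hu0]
    obtain ⟨r, hr⟩ := this
    exact ⟨1, -r, by linear_combination hr⟩
  obtain ⟨x, y, hxy⟩ := hcop
  have hmon : (Polynomial.X ^ k : Polynomial F).Monic := Polynomial.monic_X_pow k
  set w' := (w * x) %ₘ (Polynomial.X ^ k) with hw'
  have hdiv := Polynomial.modByMonic_add_div (w * x) (Polynomial.X ^ k)
  have hdeg : w'.natDegree < k := by
    have := Polynomial.natDegree_modByMonic_lt (w * x) hmon (by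
      intro h
      have := congrArg Polynomial.natDegree h
      simp at this
      omega)
    simpa using this
  set g' : MvPolynomial (Fin 3) F := ∑ j ∈ Finset.range k, C (w'.coeff j) * (linf l ^ j * linf a ^ (m - e - j))
    with hg'
  have hg'h : g'.IsHomogeneous (m - e) := by
    apply IsHomogeneous.sum
    intro j hj
    have hj := Finset.mem_range.1 hj
    have := ((linf_hom l).pow j).mul ((linf_hom a).pow (m - e - j))
    rw [show 1 * j + 1 * (m - e - j) = m - e by omega] at this
    exact this.C_mul _
  have hg'l : lineP g' (p i) (v i) = w' := by
    rw [hg', lineP_sum]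
    conv_rhs => rw [Polynomial.as_sum_range_C_mul_X_pow' w' hdeg]
    refine Finset.sum_congr rfl fun j _ => ?_
    rw [lineP_mul, lineP_mul, lineP_pow, lineP_pow, lineP_linf, lineP_linf, lineP_C, ha1, ha2, hl1, hl2]
    simp
  refine ⟨G * g', ?_, ?_, ?_⟩
  · have := hGh.mul hg'h
    rwa [show e + (m - e) = m by omega] at this
  · rw [lineP_mul, hg'l]
    change _ ∣ u * w' - w
    refine ⟨- w * y - u * ((w * x) /ₘ (Polynomial.X ^ k)), ?_⟩
    linear_combination w * hxy + u * hdiv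
  · intro j hj
    rw [lineP_mul]
    apply Dvd.dvd.mul_right
    rw [hG, lineP_prod]
    apply Dvd.dvd.trans _ (Finset.dvd_prod_of_mem _ (Finset.mem_erase.2 ⟨hj, Finset.mem_univ _⟩))
    rw [lineP_pow, lineP_linf, (hμ j hj).2]
    apply pow_dvd_pow_of_dvd
    simp

/-- jets along lines, as a linear map -/
def jetMap {ι : Type} (p v : ι → Fin 3 → F) (k m : ℕ) :
    homogeneousSubmodule (Fin 3) F m →ₗ[F] (ι × Fin k → F) where
  toFun g := fun ij => (lineP g.1 (p ij.1) (v ij.1)).coeff ij.2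
  map_add' g h := by funext ij; simp [lineP]
  map_smul' c g := by funext ij; simp [lineP]

lemma jetMap_surj {ι : Type} [Fintype ι] (p v : ι → Fin 3 → F)
    (hpv : ∀ i, crossProduct (p i) (v i) ≠ 0)
    (hpp : ∀ i j, i ≠ j → crossProduct (p i) (p j) ≠ 0) {k m : ℕ} (hk : 0 < k)
    (hm : k * Fintype.card ι + k ≤ m) : Function.Surjective (jetMap p v k m) := by
  classical
  intro y
  have := fun i => jet_surj p v hpv hpp hk hm i
    (∑ j : Fin k, Polynomial.C (y (i, j)) * Polynomial.X ^ (j : ℕ))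
  choose g hg1 hg2 hg3 using this
  refine ⟨⟨∑ i, g i, IsHomogeneous.sum _ _ _ fun i _ => hg1 i⟩, ?_⟩
  funext ⟨i, j⟩
  change (lineP (∑ i, g i) (p i) (v i)).coeff j = _
  rw [lineP_sum, Polynomial.finsetSum_coeff, Finset.sum_eq_single i]
  · have := Polynomial.X_pow_dvd_iff.1 (hg2 i) j j.2
    rw [Polynomial.coeff_sub, sub_eq_zero] at this
    rw [this, Polynomial.finsetSum_coeff, Finset.sum_eq_single j]
    · simp
    · intro b _ hb
      rw [Polynomial.coeff_C_mul_X_pow, if_neg]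
      intro h; exact hb (Fin.ext h.symm)
    · simp
  · intro b _ hb
    exact Polynomial.X_pow_dvd_iff.1 (hg3 b i hb.symm) j j.2
  · simp

/-- multiplication by a homogeneous polynomial -/
def mulHom (f : MvPolynomial (Fin 3) F) {d n m : ℕ} (hf : f.IsHomogeneous d) (h : d + n = m) :
    homogeneousSubmodule (Fin 3) F n →ₗ[F] homogeneousSubmodule (Fin 3) F m where
  toFun c := ⟨f * c.1, h ▸ hf.mul c.2⟩
  map_add' a b := by ext1; simp [mul_add]
  map_smul' c a := by ext1; simp

lemma choose_two_mul (n : ℕ) : 2 * (n + 2).choose 2 = (n + 2) * (n + 1) := by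
  induction n with
  | zero => rfl
  | succ n ih =>
    have : (n + 1 + 2).choose 2 = (n + 2).choose 1 + (n + 2).choose 2 := Nat.choose_succ_succ _ _
    rw [this, mul_add, ih, Nat.choose_one_right]; ring

/-- weak Bezout -/
lemma weak_bezout {ι : Type} [Fintype ι] (p v : ι → Fin 3 → F)
    (hpv : ∀ i, crossProduct (p i) (v i) ≠ 0)
    (hpp : ∀ i j, i ≠ j → crossProduct (p i) (p j) ≠ 0) {k d e : ℕ}
    {f h : MvPolynomial (Fin 3) F} (hf : f.IsHomogeneous d) (hh : h.IsHomogeneous e)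
    (hfp : Prime f) (hfh : ¬ f ∣ h)
    (h1 : ∀ i, Polynomial.X ^ k ∣ lineP f (p i) (v i))
    (h2 : ∀ i, Polynomial.X ^ k ∣ lineP h (p i) (v i)) : Fintype.card ι * k ≤ d * e := by
  classical
  rcases Nat.eq_zero_or_pos k with rfl | hk
  · simp
  set t := k * Fintype.card ι + k with ht
  set Φ := jetMap p v k (d + e + t) with hΦ
  have hΦs : Function.Surjective Φ := jetMap_surj p v hpv hpp hk (by omega)
  set Ψ := (mulHom f hf (show d + (e + t) = d + e + t by ring)).coprod
    (mulHom h hh (show e + (d + t) = d + e + t by ring)) with hΨ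
  set Θ := (-(mulHom h hh (show e + t = e + t from rfl))).prod
    (mulHom f hf (show d + t = d + t from rfl)) with hΘ
  have e1 := LinearMap.finrank_range_add_finrank_ker Φ
  have e2 := LinearMap.finrank_range_add_finrank_ker Ψ
  have e3 := LinearMap.finrank_range_le Θ
  rw [LinearMap.range_eq_top.2 hΦs, finrank_top, finrank_hom, Module.finrank_fintype_fun_eq_card,
    Fintype.card_prod, Fintype.card_fin] at e1
  rw [Module.finrank_prod, finrank_hom, finrank_hom] at e2
  rw [finrank_hom] at e3
  have i1 : Module.finrank F (LinearMap.range Ψ) ≤ Module.finrank F (LinearMap.ker Φ) := by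
    apply Submodule.finrank_mono
    rintro x ⟨⟨a, b⟩, rfl⟩
    rw [LinearMap.mem_ker]
    funext ⟨i, j⟩
    change (lineP (f * a.1 + h * b.1) (p i) (v i)).coeff j = 0
    have : Polynomial.X ^ k ∣ lineP (f * a.1 + h * b.1) (p i) (v i) := by
      have : lineP (f * a.1 + h * b.1) (p i) (v i) = lineP f (p i) (v i) * lineP a.1 (p i) (v i)
        + lineP h (p i) (v i) * lineP b.1 (p i) (v i) := by simp [lineP]
      rw [this]
      exact dvd_add ((h1 i).mul_right _) ((h2 i).mul_right _)
    exact Polynomial.X_pow_dvd_iff.1 this j j.2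
  have i2 : Module.finrank F (LinearMap.ker Ψ) ≤ Module.finrank F (LinearMap.range Θ) := by
    apply Submodule.finrank_mono
    rintro ⟨⟨a, ha⟩, ⟨b, hb⟩⟩ hab
    rw [LinearMap.mem_ker] at hab
    have hab : f * a + h * b = 0 := congrArg Subtype.val hab
    have hd : f ∣ h * b := ⟨-a, by linear_combination hab⟩
    obtain ⟨c, rfl⟩ := (hfp.dvd_or_dvd hd).resolve_left hfh
    have hac : a = - (h * c) := by
      apply mul_left_cancel₀ hfp.ne_zero
      linear_combination hab
    have hc : c.IsHomogeneous t := by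
      by_cases h0 : f * c = 0
      · have : c = 0 := (mul_eq_zero.1 h0).resolve_left hfp.ne_zero
        rw [this]; exact isHomogeneous_zero _ _ _
      · obtain ⟨m, n, hm, hn, hmn⟩ := hom_factor hb h0
        have : m = d := hm.inj_right hf hfp.ne_zero
        have : n = t := by omega
        exact this ▸ hn
    refine ⟨⟨c, hc⟩, ?_⟩
    apply Prod.ext
    · apply Subtype.ext
      exact hac.symm
    · rfl
  have c1 := choose_two_mul (d + e + t)
  have c2 := choose_two_mul (e + t)
  have c3 := choose_two_mul (d + t)
  have c4 := choose_two_mul t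
  nlinarith

end Bezout

section Frob
variable {F : Type} [Field F] [Fintype F]

/-- `f(X + λ X^q)` -/
def Hpoly (f : MvPolynomial (Fin 3) F) : Polynomial (MvPolynomial (Fin 3) F) :=
  aeval (fun i => Polynomial.C (X i) + Polynomial.C (X i ^ Fintype.card F) * Polynomial.X) f

lemma Hpoly_spec {A : Type} [CommRing A] [Algebra F A] (f : MvPolynomial (Fin 3) F) (x : Fin 3 → A)
    (j : ℕ) : aeval x ((Hpoly f).coeff j) = (aeval (fun i => Polynomial.C (x i) +
      Polynomial.C (x i ^ Fintype.card F) * Polynomial.X) f : Polynomial A).coeff j := by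
  have h : Polynomial.mapAlgHom (aeval x : MvPolynomial (Fin 3) F →ₐ[F] A) (Hpoly f) =
      (aeval (fun i => Polynomial.C (x i) +
      Polynomial.C (x i ^ Fintype.card F) * Polynomial.X) f : Polynomial A) := by
    rw [Hpoly, comp_aeval_apply]
    congr 2
    funext i
    simp
  rw [← h, Polynomial.coe_mapAlgHom, Polynomial.coeff_map]
  rfl

lemma Hpoly_zero (f : MvPolynomial (Fin 3) F) : (Hpoly f).coeff 0 = f := by
  have h := Hpoly_spec f (X : Fin 3 → MvPolynomial (Fin 3) F) 0
  rw [aeval_X_left_apply] at h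
  rw [h, Polynomial.coeff_zero_eq_eval_zero]
  have : ∀ P : Polynomial (MvPolynomial (Fin 3) F), P.eval 0 =
    ((Polynomial.aeval (0 : MvPolynomial (Fin 3) F)).restrictScalars F) P := by
    intro P; simp
  rw [this, comp_aeval_apply]
  simp

/-- weighted homogeneity of coefficients -/
def WH (r n : ℕ) (P : Polynomial (MvPolynomial (Fin 3) F)) : Prop :=
  ∀ j, (P.coeff j).IsHomogeneous (n + j * r)

lemma WH.mul {r m n : ℕ} {P Q : Polynomial (MvPolynomial (Fin 3) F)} (hP : WH r m P)
    (hQ : WH r n Q) : WH r (m + n) (P * Q) := by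
  intro j
  rw [Polynomial.coeff_mul]
  apply IsHomogeneous.sum
  rintro ⟨a, b⟩ hab
  have := (hP a).mul (hQ b)
  rw [Finset.HasAntidiagonal.mem_antidiagonal] at hab
  convert this using 1
  simp only at hab
  rw [← hab]; ring

lemma WH.pow {r m : ℕ} {P : Polynomial (MvPolynomial (Fin 3) F)} (hP : WH r m P) (k : ℕ) :
    WH r (k * m) (P ^ k) := by
  induction k with
  | zero =>
    intro j
    rw [pow_zero, Polynomial.coeff_one]
    split_ifs with h
    · rw [h]; simpa using isHomogeneous_one _ _
    · exact isHomogeneous_zero _ _ _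
  | succ k ih =>
    rw [pow_succ, add_mul, one_mul]
    exact ih.mul hP

lemma Hpoly_hom {f : MvPolynomial (Fin 3) F} {d : ℕ} (hf : f.IsHomogeneous d) (j : ℕ) :
    ((Hpoly f).coeff j).IsHomogeneous (d + j * (Fintype.card F - 1)) := by
  have hq : 1 < Fintype.card F := Fintype.one_lt_card
  have base : ∀ i : Fin 3, WH (Fintype.card F - 1) 1 (Polynomial.C (X i : MvPolynomial (Fin 3) F) +
      Polynomial.C (X i ^ Fintype.card F) * Polynomial.X) := by
    intro i j
    rw [Polynomial.coeff_add, Polynomial.coeff_C, Polynomial.coeff_C_mul, Polynomial.coeff_X]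
    rcases j with _ | _ | j
    · simpa using isHomogeneous_X F i
    · have := isHomogeneous_X_pow (R := F) i (Fintype.card F)
      simp only [zero_add, one_ne_zero, if_false, if_true, mul_one, one_mul]
      rwa [show 1 + (Fintype.card F - 1) = Fintype.card F by omega]
    · simpa using isHomogeneous_zero _ _ _
  rw [Hpoly, aeval_def, eval₂_eq', Polynomial.finsetSum_coeff]
  apply IsHomogeneous.sum
  intro s hs
  rw [Polynomial.algebraMap_apply, algebraMap_eq, Polynomial.coeff_C_mul, Fin.prod_univ_three]
  apply IsHomogeneous.C_mul
  have := (((base 0).pow (s 0)).mul ((base 1).pow (s 1))).mul ((base 2).pow (s 2)) j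
  rw [mul_one, mul_one, mul_one, hom_sum hf hs] at this
  exact this

lemma Hpoly_line {f : MvPolynomial (Fin 3) F} {d : ℕ} (hf : f.IsHomogeneous d) (p v : Fin 3 → F)
    {m : ℕ} (hm : Polynomial.X ^ m ∣ lineP f p v) (j : ℕ) :
    Polynomial.X ^ m ∣ lineP ((Hpoly f).coeff j) p v := by
  rw [lineP, Hpoly_spec]
  have hx : ∀ i : Fin 3, (Polynomial.C (p i) + Polynomial.C (v i) * Polynomial.X) ^ Fintype.card F
      = Polynomial.C (p i) + Polynomial.C (v i) * Polynomial.X ^ Fintype.card F := by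
    intro i
    rw [← FiniteField.expand_card]
    simp
  have h := aeval_smul_add (A := Polynomial (Polynomial F)) hf p v (1 + Polynomial.X)
    (Polynomial.C Polynomial.X + Polynomial.C (Polynomial.X ^ Fintype.card F) * Polynomial.X)
  have h2 : (fun i : Fin 3 => (algebraMap F (Polynomial (Polynomial F))) (p i) * (1 + Polynomial.X) +
      (algebraMap F (Polynomial (Polynomial F))) (v i) * (Polynomial.C Polynomial.X +
        Polynomial.C (Polynomial.X ^ Fintype.card F) * Polynomial.X)) =
      fun i => Polynomial.C (Polynomial.C (p i) + Polynomial.C (v i) * Polynomial.X) +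
        Polynomial.C ((Polynomial.C (p i) + Polynomial.C (v i) * Polynomial.X) ^ Fintype.card F)
          * Polynomial.X := by
    funext i
    rw [hx]
    simp only [Polynomial.algebraMap_apply, Polynomial.algebraMap_eq, map_add, map_mul, map_pow]
    ring
  rw [h2] at h
  rw [h]
  revert j
  rw [← Polynomial.C_dvd_iff_dvd_coeff]
  apply Finset.dvd_sum
  intro k _
  by_cases hk : k < m
  · rw [Polynomial.X_pow_dvd_iff.1 hm k hk]; simp
  · apply Dvd.dvd.mul_left
    apply Dvd.dvd.mul_left
    have hq : Fintype.card F ≠ 0 := Fintype.card_ne_zero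
    rw [map_pow]
    refine (pow_dvd_pow _ (not_lt.1 hk)).trans (pow_dvd_pow_of_dvd ?_ k)
    apply dvd_add dvd_rfl
    apply Dvd.dvd.mul_right
    exact map_dvd Polynomial.C (dvd_pow_self _ hq)

lemma contact_aux {A : Type} [CommRing A] [Algebra F A] {f : MvPolynomial (Fin 3) F} {d m : ℕ}
    (hf : f.IsHomogeneous d) (p v n : Fin 3 → F) (hm2 : 2 ≤ m) (hmd : m ≤ d)
    (hlt : ∀ k, k < m → (lineP f p v).coeff k = 0) (c ρ κ : F) (hcdef : (lineP f p v).coeff m = c)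
    (hκ : dotProduct n (fun i => eval p (pderiv i f)) = κ) (hρκ : ρ * κ = - c)
    (σ : A) (hσ : ∀ k, m + 1 ≤ k → σ ^ k = 0) (γ : Fin 3 → A)
    (hγ : γ = fun i => algebraMap F A (p i) + algebraMap F A (v i) * σ +
      σ ^ m * algebraMap F A (ρ * n i))
    (hγq : ∀ i, γ i ^ Fintype.card F = algebraMap F A (p i)) :
    (aeval (fun i => Polynomial.C (γ i) +
      Polynomial.C (γ i ^ Fintype.card F) * Polynomial.X) f : Polynomial A) =
      Polynomial.C (algebraMap F A c * σ ^ m) *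
        ((1 + Polynomial.X) ^ (d - m) - (1 + Polynomial.X) ^ (d - 1) : Polynomial F).map
          (algebraMap F A) := by
  set τ : Polynomial A := Polynomial.C σ with hτ
  have hτ' : ∀ k, m + 1 ≤ k → τ ^ k = 0 := by
    intro k hk
    rw [hτ, ← map_pow, hσ k hk, map_zero]
  have ht := taylor1 (A := Polynomial A) f
    (fun i => algebraMap F (Polynomial A) (p i) * (1 + Polynomial.X) +
      algebraMap F (Polynomial A) (v i) * τ)
    (fun i => algebraMap F (Polynomial A) (ρ * n i)) (τ ^ m)
    (by rw [← pow_add]; exact hτ' _ (by omega))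
  have e1 : (fun i => algebraMap F (Polynomial A) (p i) * (1 + Polynomial.X) +
      algebraMap F (Polynomial A) (v i) * τ + τ ^ m * algebraMap F (Polynomial A) (ρ * n i)) =
      fun i => Polynomial.C (γ i) + Polynomial.C (γ i ^ Fintype.card F) * Polynomial.X := by
    funext i
    rw [hγq]
    simp only [hγ, Polynomial.algebraMap_apply, map_add, map_mul, map_pow, hτ]
    ring
  rw [e1] at ht
  rw [ht, aeval_smul_add hf]
  have e2 : ∑ k ∈ Finset.range (d + 1), algebraMap F (Polynomial A) ((lineP f p v).coeff k) *
      ((1 + Polynomial.X) ^ (d - k) * τ ^ k) =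
      algebraMap F (Polynomial A) c * ((1 + Polynomial.X) ^ (d - m) * τ ^ m) := by
    rw [Finset.sum_eq_single m]
    · rw [hcdef]
    · intro k _ hk
      rcases lt_or_gt_of_ne hk with h | h
      · rw [show (lineP f p v).coeff k = 0 from hlt k h, map_zero, zero_mul]
      · rw [hτ' k h, mul_zero, mul_zero]
    · intro h
      exact absurd (Finset.mem_range.2 (by omega)) h
  have e3 : ∀ i : Fin 3, τ ^ m * aeval (fun i => algebraMap F (Polynomial A) (p i) * (1 + Polynomial.X) +
      algebraMap F (Polynomial A) (v i) * τ) (pderiv i f) =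
      τ ^ m * (algebraMap F (Polynomial A) (eval p (pderiv i f)) * (1 + Polynomial.X) ^ (d - 1)) := by
    intro i
    rw [aeval_smul_add hf.pderiv, Finset.sum_range_succ', mul_add, Finset.mul_sum,
      Finset.sum_eq_zero]
    · rw [lineP_coeff_zero]; simp
    · intro k _
      have := hτ' (m + (k + 1)) (by omega)
      rw [pow_add] at this
      linear_combination (algebraMap F (Polynomial A) ((lineP (pderiv i f) p v).coeff (k + 1)) *
        (1 + Polynomial.X) ^ (d - 1 - (k + 1))) * this
  rw [e2, Finset.mul_sum]
  have e4 : ∀ i : Fin 3, τ ^ m * (algebraMap F (Polynomial A) (ρ * n i) *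
      aeval (fun i => algebraMap F (Polynomial A) (p i) * (1 + Polynomial.X) +
      algebraMap F (Polynomial A) (v i) * τ) (pderiv i f)) =
      algebraMap F (Polynomial A) (ρ * (n i * eval p (pderiv i f))) *
        (τ ^ m * (1 + Polynomial.X) ^ (d - 1)) := by
    intro i
    have := e3 i
    simp only [map_mul]
    linear_combination (algebraMap F (Polynomial A) ρ * algebraMap F (Polynomial A) (n i)) * this
  simp_rw [e4]
  rw [← Finset.sum_mul, ← map_sum, ← Finset.mul_sum]
  change _ + algebraMap F (Polynomial A) (ρ * dotProduct n (fun i => eval p (pderiv i f))) * _ = _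
  rw [hκ, hρκ]
  simp only [Polynomial.map_sub, Polynomial.map_pow, Polynomial.map_add, Polynomial.map_one,
    Polynomial.map_X, map_neg, map_mul, map_pow, Polynomial.algebraMap_apply, hτ]
  ring

lemma contact {f : MvPolynomial (Fin 3) F} {d : ℕ} (hf : f.IsHomogeneous d) (hd : 2 ≤ d)
    (hdq : d + 1 ≤ Fintype.card F) (p v n : Fin 3 → F) (hp : eval p f = 0)
    (hv : dotProduct v (fun i => eval p (pderiv i f)) = 0)
    (hn : dotProduct n (fun i => eval p (pderiv i f)) ≠ 0)
    (hne : lineP f p v ≠ 0) (Q : ℕ) (hQ : ∀ j, 1 ≤ j → j < Q → f ∣ (Hpoly f).coeff j) :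
    Polynomial.X ^ (Q + 1) ∣ lineP f p v := by
  set g := lineP f p v with hg
  set κ := dotProduct n (fun i => eval p (pderiv i f)) with hκ
  set m := g.natTrailingDegree with hm
  have hlt : ∀ k, k < m → g.coeff k = 0 := fun k hk =>
    Polynomial.coeff_eq_zero_of_lt_natTrailingDegree hk
  have hc : g.coeff m ≠ 0 := by
    have := Polynomial.trailingCoeff_nonzero_iff_nonzero.2 hne
    exact this
  set c := g.coeff m with hcdef
  have h0 : g.coeff 0 = 0 := by rw [hg, lineP_coeff_zero, hp]
  have h1 : g.coeff 1 = 0 := by rw [hg, lineP_coeff_one]; exact hv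
  have hm2 : 2 ≤ m := by
    by_contra! h
    rcases (by omega : m = 0 ∨ m = 1) with h' | h'
    · exact hc (by rw [hcdef, h']; exact h0)
    · exact hc (by rw [hcdef, h']; exact h1)
  have hmd : m ≤ d := (Polynomial.natTrailingDegree_le_natDegree g).trans (lineP_natDegree hf p v)
  by_cases hmQ : Q + 1 ≤ m
  · rw [Polynomial.X_pow_dvd_iff]
    intro k hk; exact hlt k (by omega)
  exfalso
  -- the truncated ring
  let I : Ideal (Polynomial F) := Ideal.span {Polynomial.X ^ (m + 1)}
  let A : Type := Polynomial F ⧸ I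
  let σ : A := Ideal.Quotient.mk I Polynomial.X
  have hσ : σ ^ (m + 1) = 0 := by
    change (Ideal.Quotient.mk I Polynomial.X) ^ (m + 1) = 0
    rw [← map_pow, Ideal.Quotient.eq_zero_iff_mem]
    exact Ideal.mem_span_singleton_self _
  have hσ' : ∀ k, m + 1 ≤ k → σ ^ k = 0 := by
    intro k hk
    rw [← Nat.sub_add_cancel hk, pow_add, hσ, mul_zero]
  have halg : ∀ a : F, algebraMap F A a = Ideal.Quotient.mk I (Polynomial.C a) := fun a => rfl
  have hinj : ∀ a : F, algebraMap F A a * σ ^ m = 0 → a = 0 := by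
    intro a ha
    have ha : Ideal.Quotient.mk I (Polynomial.C a * Polynomial.X ^ m) = 0 := by
      rw [map_mul, map_pow]; exact ha
    rw [Ideal.Quotient.eq_zero_iff_mem, Ideal.mem_span_singleton, Polynomial.X_pow_dvd_iff] at ha
    simpa using ha m (by omega)
  set ρ : F := - c / κ with hρ
  have hρκ : ρ * κ = - c := by rw [hρ]; field_simp
  set γ : Fin 3 → A := fun i => algebraMap F A (p i) + algebraMap F A (v i) * σ +
    σ ^ m * algebraMap F A (ρ * n i) with hγ
  have hγq : ∀ i, γ i ^ Fintype.card F = algebraMap F A (p i) := by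
    intro i
    have e : γ i = Ideal.Quotient.mk I (Polynomial.C (p i) + Polynomial.C (v i) * Polynomial.X +
      Polynomial.X ^ m * Polynomial.C (ρ * n i)) := by
      rw [map_add, map_add, map_mul, map_mul, map_pow]; rfl
    rw [e, ← map_pow, ← FiniteField.expand_card]
    simp only [map_add, map_mul, map_pow, Polynomial.expand_C, Polynomial.expand_X]
    change algebraMap F A (p i) + algebraMap F A (v i) * σ ^ Fintype.card F +
      (σ ^ Fintype.card F) ^ m * _ = _
    rw [hσ' _ (by omega), zero_pow (by omega)]
    ring
  -- the key computation
  set E : Polynomial F := (1 + Polynomial.X) ^ (d - m) - (1 + Polynomial.X) ^ (d - 1) with hE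
  have hcomp : (aeval (fun i => Polynomial.C (γ i) +
      Polynomial.C (γ i ^ Fintype.card F) * Polynomial.X) f : Polynomial A) =
      Polynomial.C (algebraMap F A c * σ ^ m) * E.map (algebraMap F A) := by
    exact contact_aux hf p v n hm2 hmd hlt c ρ κ rfl rfl hρκ σ hσ' γ hγ hγq
  have hcoef : ∀ j, aeval γ ((Hpoly f).coeff j) = algebraMap F A (c * E.coeff j) * σ ^ m := by
    intro j
    rw [Hpoly_spec, hcomp, Polynomial.coeff_C_mul, Polynomial.coeff_map, map_mul]
    ring
  have hE0 : E.coeff 0 = 0 := by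
    rw [hE, Polynomial.coeff_zero_eq_eval_zero]; simp
  have hfγ : aeval γ f = 0 := by
    have := hcoef 0
    rw [Hpoly_zero, hE0] at this
    simpa using this
  have hEj : ∀ j, j < Q → E.coeff j = 0 := by
    intro j hj
    rcases Nat.eq_zero_or_pos j with rfl | hj0
    · exact hE0
    · obtain ⟨r, hr⟩ := hQ j hj0 hj
      have h3 := hcoef j
      rw [hr, map_mul, hfγ, zero_mul] at h3
      exact (mul_eq_zero.1 (hinj _ h3.symm)).resolve_left hc
  have hdvd : Polynomial.X ^ Q ∣ E := Polynomial.X_pow_dvd_iff.2 hEj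
  have hE2 : E = (1 + Polynomial.X) ^ (d - m) * (1 - (1 + Polynomial.X) ^ (m - 1)) := by
    rw [hE, mul_sub, ← pow_add, show d - m + (m - 1) = d - 1 by omega, mul_one]
  have hcop : IsCoprime (Polynomial.X ^ Q : Polynomial F) ((1 + Polynomial.X) ^ (d - m)) := by
    apply IsCoprime.pow
    exact ⟨-1, 1, by ring⟩
  rw [hE2] at hdvd
  have hdvd2 := hcop.dvd_of_dvd_mul_left hdvd
  have hcf := Polynomial.X_pow_dvd_iff.1 hdvd2 (m - 1) (by omega)
  have hmon : ((1 + Polynomial.X : Polynomial F) ^ (m - 1)).coeff (m - 1) = 1 := by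
    rw [Polynomial.coeff_one_add_X_pow]; simp
  rw [Polynomial.coeff_sub, hmon, Polynomial.coeff_one, if_neg (by omega)] at hcf
  simp at hcf

end Frob

section CaseLow
open Configuration ProjectivePlane Projectivization
open scoped LinearAlgebra.Projectivization
variable {F : Type} [Field F] [Fintype F] [DecidableEq F]

lemma NoLine.ne_zero {f : MvPolynomial (Fin 3) F} (h : NoLine f) : f ≠ 0 := by
  rintro rfl
  exact h ⟨X 0, X_ne_zero _, isHomogeneous_X F 0, dvd_zero _⟩

lemma NoLine.of_dvd {f g : MvPolynomial (Fin 3) F} (h : NoLine f) (hg : g ∣ f) : NoLine g := by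
  rintro ⟨l, h0, h1, h2⟩
  exact h ⟨l, h0, h1, h2.trans hg⟩

lemma hom_zero_unit {a : MvPolynomial (Fin 3) F} (h : a.IsHomogeneous 0) (h0 : a ≠ 0) :
    IsUnit a := by
  have h1 : a.totalDegree = 0 := h.totalDegree h0
  rw [totalDegree_eq_zero_iff_eq_C] at h1
  rw [h1]
  apply IsUnit.map
  rw [isUnit_iff_ne_zero]
  intro h2
  rw [h2, C_0] at h1
  exact h0 h1

lemma hom_pos_not_unit {a : MvPolynomial (Fin 3) F} {d : ℕ} (h : a.IsHomogeneous d) (hd : 1 ≤ d)  :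
    ¬ IsUnit a := by
  intro hu
  have h0 : a ≠ 0 := hu.ne_zero
  have h1 : a.totalDegree = d := h.totalDegree h0
  obtain ⟨b, hb⟩ := hu.exists_right_inv
  have hb0 : b ≠ 0 := by rintro rfl; simp at hb
  have := totalDegree_mul_of_isDomain h0 hb0
  rw [hb, totalDegree_one] at this
  omega

lemma arith_low {N Q d q : ℕ} (hQ : 1 ≤ Q) (hQd : Q + 1 ≤ d) (hd : d + 1 ≤ q)
    (h : N * (Q + 1) ≤ d * (d + Q * (q - 1))) : N ≤ (d - 1) * q + 1 := by
  obtain ⟨s, rfl⟩ : ∃ s, d = Q + 1 + s := ⟨d - (Q + 1), by omega⟩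
  obtain ⟨t, rfl⟩ : ∃ t, q = Q + 1 + s + 1 + t := ⟨q - (Q + 1 + s + 1), by omega⟩
  have e1 : Q + 1 + s + 1 + t - 1 = Q + 1 + s + t := by omega
  have e2 : Q + 1 + s - 1 = Q + s := by omega
  rw [e1] at h
  rw [e2]
  have : N * (Q + 1) ≤ ((Q + s) * (Q + 1 + s + 1 + t) + 1) * (Q + 1) := by
    refine h.trans ?_
    have : (Q + 1 + s) * (Q + 1 + s + Q * (Q + 1 + s + t)) + s * t =
      ((Q + s) * (Q + 1 + s + 1 + t) + 1) * (Q + 1) := by ring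
    omega
  exact Nat.le_of_mul_le_mul_right this (by omega)

lemma irred_bound {f : MvPolynomial (Fin 3) F} {d : ℕ} (hf : f.IsHomogeneous d) (hnl : NoLine f)
    (hd : 2 ≤ d) (hdq : d + 1 ≤ Fintype.card F) (hirr : Irreducible f) :
    (zf f).card ≤ (d - 1) * Fintype.card F + 1 := by
  by_cases hs : ∃ P ∈ zf f, grad f P.rep = 0
  · obtain ⟨P, hP, hg⟩ := hs
    refine (singular_bound hf hnl hd P hP hg).trans ?_
    obtain ⟨k, rfl⟩ : ∃ k, d = k + 2 := ⟨d - 2, by omega⟩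
    simp only [Nat.add_sub_cancel, show k + 2 - 1 = k + 1 by omega]
    nlinarith
  push Not at hs
  rcases (zf f).eq_empty_or_nonempty with he | ⟨P0, hP0⟩
  · rw [he]; simp
  have hv : ∀ P : ↥(zf f), ∃ v : Fin 3 → F, crossProduct P.1.rep v ≠ 0 ∧
      dotProduct v (grad f P.1.rep) = 0 := by
    rintro ⟨P, hP⟩
    have hg := hs P hP
    obtain ⟨u, hu, hc, -⟩ := line_param (mk F _ hg) P (by
      rw [mem_mk_iff_dot]; exact euler_grad hf _ ((mem_zf _ _).1 hP))
    obtain ⟨c, hc2⟩ := mk_grad_spec hg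
    refine ⟨u, ?_, ?_⟩
    · intro h
      apply hc
      rw [← cross_anticomm, h, neg_zero]
    · rw [hc2, dotProduct_smul, hu, smul_zero]
  have hn : ∀ P : ↥(zf f), ∃ n : Fin 3 → F, dotProduct n (grad f P.1.rep) ≠ 0 := by
    rintro ⟨P, hP⟩
    obtain ⟨i, hi⟩ := Function.ne_iff.1 (hs P hP)
    exact ⟨Pi.single i 1, by rw [single_one_dotProduct]; exact hi⟩
  choose v hv1 hv2 using hv
  choose n hn using hn
  have hcontact : ∀ (P : ↥(zf f)) (Q : ℕ), (∀ j, 1 ≤ j → j < Q → f ∣ (Hpoly f).coeff j) →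
      Polynomial.X ^ (Q + 1) ∣ lineP f P.1.rep (v P) := fun P Q hQ =>
    contact hf hd hdq P.1.rep (v P) (n P) ((mem_zf _ _).1 P.2) (hv2 P) (hn P)
      (hnl.lineP_ne hf (hv1 P)) Q hQ
  have hex : ∃ Q, 1 ≤ Q ∧ Q < d ∧ ¬ f ∣ (Hpoly f).coeff Q := by
    by_contra! hcon
    have h1 := hcontact ⟨P0, hP0⟩ d hcon
    have h2 := hnl.lineP_ne hf (hv1 ⟨P0, hP0⟩)
    have h3 := Polynomial.natDegree_le_of_dvd h1 h2
    have h4 := lineP_natDegree hf P0.rep (v ⟨P0, hP0⟩)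
    rw [Polynomial.natDegree_X_pow] at h3
    have := h3.trans h4
    omega
  classical
  obtain ⟨hQ1, hQd, hQn⟩ := Nat.find_spec hex
  set Q := Nat.find hex with hQdef
  have hQm : ∀ j, 1 ≤ j → j < Q → f ∣ (Hpoly f).coeff j := by
    intro j h1 h2
    have := Nat.find_min hex h2
    by_contra h3
    exact this ⟨h1, h2.trans hQd, h3⟩
  have hb := weak_bezout (ι := ↥(zf f)) (fun P => P.1.rep) v hv1
    (fun i j hij => cross_ne_of_ne (fun h => hij (Subtype.ext h))) hf (Hpoly_hom hf Q)
    hirr.prime hQn (fun P => hcontact P Q hQm) (fun P => Hpoly_line hf _ _ (hcontact P Q hQm) Q)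
  rw [Fintype.card_coe] at hb
  exact arith_low hQ1 hQd hdq hb

lemma case_low (d : ℕ) : 1 ≤ d → d + 1 ≤ Fintype.card F → ∀ f : MvPolynomial (Fin 3) F,
    f.IsHomogeneous d → NoLine f → (zf f).card ≤ (d - 1) * Fintype.card F + 1 := by
  classical
  induction d using Nat.strong_induction_on with
  | _ d ih =>
  intro hd hdq f hf hnl
  have hf0 := hnl.ne_zero
  rcases Nat.lt_or_ge d 2 with h | h
  · have : d = 1 := by omega
    subst this
    exact absurd ⟨f, hf0, hf, dvd_rfl⟩ hnl
  by_cases hirr : Irreducible f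
  · exact irred_bound hf hnl h hdq hirr
  rw [irreducible_iff] at hirr
  push Not at hirr
  obtain ⟨a, b, hab, ha, hb⟩ := hirr (hom_pos_not_unit hf hd)
  subst hab
  obtain ⟨m, k, hm, hk, hmk⟩ := hom_factor hf hf0
  have ha0 := left_ne_zero_of_mul hf0
  have hb0 := right_ne_zero_of_mul hf0
  have hm1 : 1 ≤ m := by
    by_contra! h0
    obtain rfl : m = 0 := by omega
    exact ha (hom_zero_unit hm ha0)
  have hk1 : 1 ≤ k := by
    by_contra! h0
    obtain rfl : k = 0 := by omega
    exact hb (hom_zero_unit hk hb0)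
  have h1 := ih m (by omega) hm1 (by omega) a hm (hnl.of_dvd (dvd_mul_right _ _))
  have h2 := ih k (by omega) hk1 (by omega) b hk (hnl.of_dvd (dvd_mul_left _ _))
  have h3 : zf (a * b) ⊆ zf a ∪ zf b := by
    intro P hP
    rw [mem_zf, map_mul, mul_eq_zero] at hP
    rw [Finset.mem_union, mem_zf, mem_zf]
    exact hP
  have h4 := (Finset.card_le_card h3).trans (Finset.card_union_le _ _)
  obtain ⟨m, rfl⟩ : ∃ x, m = x + 1 := ⟨m - 1, by omega⟩
  obtain ⟨k, rfl⟩ : ∃ x, k = x + 1 := ⟨k - 1, by omega⟩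
  subst hmk
  simp only [Nat.add_sub_cancel, show m + 1 + (k + 1) - 1 = m + k + 1 by omega] at *
  have : 1 ≤ Fintype.card F := by omega
  nlinarith

end CaseLow

section MainThm
variable {F : Type} [Field F] [Fintype F] [DecidableEq F]

lemma main_bound (d : ℕ) (hd : 0 < d) (f : MvPolynomial (Fin 3) F) (hfd : f.IsHomogeneous d)
    (hnl : NoLine f) (hne : ¬ (Fintype.card F = 4 ∧ d = 4 ∧
      ProjectivelyEquivalent F f (hommaKimQuartic F))) :
    (zf f).card ≤ (d - 1) * Fintype.card F + 1 := by
  rcases lt_trichotomy d (Fintype.card F) with h | h | h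
  · exact case_low d hd h f hfd hnl
  · subst h
    rcases case_q_struct hfd hnl with h | ⟨h4, h7, hl⟩
    · exact h
    · refine absurd ⟨h4, h4, ?_⟩ hne
      rw [h4] at hfd
      exact exceptional_struct h4 hfd h7 hl
  · rcases Nat.eq_or_lt_of_le h with h | h
    · have h' : d = Fintype.card F + 1 := h.symm
      subst h'
      exact case_q_plus_one hfd hnl
    · have h1 := (zf f).card_le_univ
      rw [pp_card] at h1
      have h2 : (Fintype.card F + 1) * Fintype.card F ≤ (d - 1) * Fintype.card F :=
        Nat.mul_le_mul_right _ (by omega)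
      nlinarith

lemma ncard_eq_zf (f : MvPolynomial (Fin 3) F) :
    {x : Projectivization F (Fin 3 → F) | MvPolynomial.eval x.rep f = 0}.ncard = (zf f).card := by
  rw [← Set.ncard_coe_finset]
  congr 1
  ext x
  simp [mem_zf]

end MainThm

/-- Homma--Kim bound for plane curves without `F_q`-linear component. -/
theorem stmt_0 (q : ℕ) (hq : IsPrimePow q)
    (F : Type) [Field F] [Fintype F] (hF : Fintype.card F = q)
    (d : ℕ) (hd : 0 < d)
    (f : MvPolynomial (Fin 3) F) (hf0 : f ≠ 0) (hfd : f.IsHomogeneous d)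
    (hnoline : ¬ ∃ l : MvPolynomial (Fin 3) F, l ≠ 0 ∧ l.IsHomogeneous 1 ∧ l ∣ f) :
    (¬ (q = 4 ∧ d = 4 ∧ ProjectivelyEquivalent F f (hommaKimQuartic F)) →
      {x : Projectivization F (Fin 3 → F) | MvPolynomial.eval x.rep f = 0}.ncard
        ≤ (d - 1) * q + 1) ∧
    ((q = 4 ∧ d = 4 ∧ ProjectivelyEquivalent F f (hommaKimQuartic F)) →
      {x : Projectivization F (Fin 3 → F) | MvPolynomial.eval x.rep f = 0}.ncard = 14) := by
  classical
  subst hF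
  rw [ncard_eq_zf]
  refine ⟨fun h => main_bound d hd f hfd hnoline h, fun h => exceptional_count h.1 f h.2.2⟩
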